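/- arXiv:0910.0237 — 2 statements merged into one kernel-verified Lean document; each statement's English description precedes it below -/
import Mathlib

section
/- If (Y,f) is a transitive finitely presented system, then there exist a subshift of finite type (Σ,σ), a Smale space (X,F), an s-resolving factor map α : Σ → X, and a u-resolving factor map β : X → Y. -/
open Filter Topology Set

/-- `f` is expansive with expansive constant `c`. -/
def Expansive {X : Type*} [MetricSpace X] (f : Equiv.Perm X) (c : ℝ) : Prop :=
  ∀ p q : X, p ≠ q → ∃ n : ℤ, c < dist ((f ^ n) p) ((f ^ n) q)

/-- The ε-stable set of `x`. -/
def Ws {X : Type*} [MetricSpace X] (f : Equiv.Perm X) (ε : ℝ) (x : X) : Set X :=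
  {y | ∀ n : ℕ, dist ((f ^ (n : ℤ)) x) ((f ^ (n : ℤ)) y) < ε}

/-- The ε-unstable set of `x`. -/
def Wu {X : Type*} [MetricSpace X] (f : Equiv.Perm X) (ε : ℝ) (x : X) : Set X :=
  {y | ∀ n : ℕ, dist ((f ^ (-(n : ℤ))) x) ((f ^ (-(n : ℤ))) y) < ε}

/-- The stable set of `x`. -/
def stableSet {X : Type*} [MetricSpace X] (f : Equiv.Perm X) (x : X) : Set X :=
  {y | Filter.Tendsto (fun n : ℕ => dist ((f ^ (n : ℤ)) x) ((f ^ (n : ℤ)) y))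
    Filter.atTop (nhds 0)}

/-- The unstable set of `x`. -/
def unstableSet {X : Type*} [MetricSpace X] (f : Equiv.Perm X) (x : X) : Set X :=
  {y | Filter.Tendsto (fun n : ℕ => dist ((f ^ (-(n : ℤ))) x) ((f ^ (-(n : ℤ))) y))
    Filter.atTop (nhds 0)}

/-- Canonical coordinates: for all sufficiently small ε > 0 there is δ > 0 such that
points at distance < δ have a unique bracket `[x,y] = W^s_ε(x) ∩ W^u_ε(y)`. -/
def CanonicalCoords {X : Type*} [MetricSpace X] (f : Equiv.Perm X) : Prop :=
  ∃ ε₀ > 0, ∀ ε : ℝ, 0 < ε → ε ≤ ε₀ → ∃ δ > 0, ∀ x y : X, dist x y < δ →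
    ∃! z, z ∈ Ws f ε x ∩ Wu f ε y

/-- A Smale space: an expansive homeomorphism with canonical coordinates. -/
def IsSmale {X : Type*} [MetricSpace X] (f : Equiv.Perm X) : Prop :=
  Continuous (⇑f) ∧ Continuous (⇑f.symm) ∧ (∃ c > 0, Expansive f c) ∧ CanonicalCoords f

/-- Topological transitivity. -/
def TopTransitive {X : Type*} [MetricSpace X] (f : Equiv.Perm X) : Prop :=
  ∀ U V : Set X, IsOpen U → IsOpen V → U.Nonempty → V.Nonempty →
    ∃ n : ℕ, ((f ^ (n : ℤ)) ⁻¹' U ∩ V).Nonempty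

/-- A periodic point of `f`. -/
def IsPeriodicPoint {X : Type*} [MetricSpace X] (f : Equiv.Perm X) (p : X) : Prop :=
  ∃ N : ℕ, 0 < N ∧ (f ^ (N : ℤ)) p = p

/-- A factor map (surjective continuous semiconjugacy). -/
def IsFactorMap {X Y : Type*} [MetricSpace X] [MetricSpace Y]
    (F : Equiv.Perm X) (f : Equiv.Perm Y) (π : X → Y) : Prop :=
  Continuous π ∧ Function.Surjective π ∧ ∀ x, π (F x) = f (π x)

/-- A map is u-resolving if it is injective on unstable sets. -/
def UResolving {X Y : Type*} [MetricSpace X] (F : Equiv.Perm X) (π : X → Y) : Prop :=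
  ∀ x : X, Set.InjOn π (unstableSet F x)

/-- A map is s-resolving if it is injective on stable sets. -/
def SResolving {X Y : Type*} [MetricSpace X] (F : Equiv.Perm X) (π : X → Y) : Prop :=
  ∀ x : X, Set.InjOn π (stableSet F x)

/-- The shift map on bi-infinite sequences. -/
def shiftE (A : Type*) : Equiv.Perm (ℤ → A) where
  toFun x i := x (i + 1)
  invFun x i := x (i - 1)
  left_inv x := funext fun i => congrArg x (by ring)
  right_inv x := funext fun i => congrArg x (by ring)

/-- The word `w` occurs in the sequence `x`. -/
def OccursIn {A : Type*} {k : ℕ} (w : Fin k → A) (x : ℤ → A) : Prop :=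
  ∃ i : ℤ, ∀ j : Fin k, x (i + (j : ℤ)) = w j

/-- A subshift of finite type: the sequences avoiding a finite set of forbidden words. -/
def IsSFT {A : Type*} (S : Set (ℤ → A)) : Prop :=
  ∃ Fw : Set ((k : ℕ) × (Fin k → A)), Fw.Finite ∧
    S = {x | ∀ w ∈ Fw, ¬ OccursIn w.2 x}

/-- A one-step SFT (vertex shift) with transition rule `T`. -/
def IsOneStepSFTFor {A : Type*} (T : A → A → Prop) (S : Set (ℤ → A)) : Prop :=
  S = {x | ∀ i : ℤ, T (x i) (x (i + 1))}

/-- `S` is invariant under the shift and its inverse. -/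
def ShiftInvariant {A : Type*} (S : Set (ℤ → A)) : Prop :=
  (∀ x ∈ S, shiftE A x ∈ S) ∧ (∀ x ∈ S, (shiftE A).symm x ∈ S)

/-- A factor map from the subshift `(S, σ)` onto the system `(Y, f)`. -/
def IsSubshiftFactorMap {A Y : Type*} [TopologicalSpace A] [MetricSpace Y]
    (S : Set (ℤ → A)) (f : Equiv.Perm Y) (φ : (ℤ → A) → Y) : Prop :=
  ContinuousOn φ S ∧ φ '' S = Set.univ ∧ ∀ x ∈ S, φ (shiftE A x) = f (φ x)

/-- Topological transitivity of the shift restricted to `S`. -/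
def SubshiftTransitive {A : Type*} [TopologicalSpace A] (S : Set (ℤ → A)) : Prop :=
  ∀ U V : Set (ℤ → A), IsOpen U → IsOpen V → (U ∩ S).Nonempty → (V ∩ S).Nonempty →
    ∃ n : ℕ, (((shiftE A) ^ (n : ℤ)) ⁻¹' U ∩ V ∩ S).Nonempty

/-- The stable set of `t` in the subshift `S`: points eventually agreeing with `t`. -/
def shiftStable {A : Type*} (S : Set (ℤ → A)) (t : ℤ → A) : Set (ℤ → A) :=
  {t' ∈ S | ∃ N : ℤ, ∀ i ≥ N, t' i = t i}

/-- A finitely presented system: an expansive system that is a factor of an SFT. -/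
def FinitelyPresented {Y : Type*} [MetricSpace Y] (f : Equiv.Perm Y) : Prop :=
  Continuous (⇑f) ∧ Continuous (⇑f.symm) ∧ (∃ c > 0, Expansive f c) ∧
  ∃ (N : ℕ) (S : Set (ℤ → Fin N)), IsSFT S ∧ ShiftInvariant S ∧ S.Nonempty ∧
    ∃ φ : (ℤ → Fin N) → Y, IsSubshiftFactorMap S f φ

namespace FPS

/-- Bi-infinite path. -/
def BP {A : Type} (T : A → A → Prop) (t : ℤ → A) : Prop := ∀ i, T (t i) (t (i + 1))

/-- Left-infinite path, up to time `i`. -/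
def LP {A : Type} (T : A → A → Prop) (p : ℤ → A) (i : ℤ) : Prop := ∀ j, j < i → T (p j) (p (j + 1))

/-- Presentations. -/
structure Pres0 {Y : Type} [MetricSpace Y] (f : Equiv.Perm Y) (A : Type) (T : A → A → Prop)
    (K : ℕ → A → A → Prop) (φ : (ℤ → A) → Y) : Prop where
  refl : ∀ a, K 1 a a
  symm : ∀ {r a b}, K r a b → K r b a
  mono : ∀ {r s a b}, r ≤ s → K r a b → K s a b
  tri : ∀ {r s a b c}, K r a b → K s b c → K (r + s) a c
  surj : ∀ y, ∃ t, BP T t ∧ φ t = y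
  equi : ∀ t, BP T t → φ (fun i => t (i + 1)) = f (φ t)
  K1 : ∀ t t', BP T t → BP T t' → φ t = φ t' → ∀ i, K 1 (t i) (t' i)
  cont : ∀ ε : ℝ, 0 < ε → ∃ n : ℕ, ∀ t t', BP T t → BP T t' →
    (∀ i : ℤ, -n ≤ i → i ≤ n → K 9 (t i) (t' i)) → dist (φ t) (φ t') < ε

/-- No diamonds. -/
def ND {A : Type} (T : A → A → Prop) (K : ℕ → A → A → Prop) : Prop :=
  ∀ t t', BP T t → BP T t' → (∃ m : ℤ, ∀ j, j ≤ m → t j = t' j) →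
    (∃ m : ℤ, ∀ j, m ≤ j → t j = t' j) → (∀ i, K 9 (t i) (t' i)) → t = t'

lemma ulim {A : Type} [Finite A] (x : ℕ → ℤ → A) :
    ∃ x' : ℤ → A, ∀ k N : ℕ, ∃ n, N ≤ n ∧ ∀ i : ℤ, -k ≤ i → i ≤ k → x n i = x' i := by
  have h : ∀ i : ℤ, ∃ a, ∀ᶠ n in (hyperfilter ℕ : Filter ℕ), x n i = a := by
    intro i
    have := (Ultrafilter.eventually_exists_iff (α := ℕ) (f := hyperfilter ℕ)
      (P := fun (a : A) n => x n i = a)).1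
    exact this (Filter.Eventually.of_forall fun n => ⟨_, rfl⟩)
  choose x' hx' using h
  refine ⟨x', fun k N => ?_⟩
  have h1 : ∀ᶠ n in (hyperfilter ℕ : Filter ℕ), ∀ i ∈ Set.Icc (-(k : ℤ)) k, x n i = x' i :=
    (Filter.eventually_all_finite (Set.finite_Icc _ _)).2 fun i _ => hx' i
  have h2 : ∀ᶠ n in (hyperfilter ℕ : Filter ℕ), N ≤ n := by
    have : (hyperfilter ℕ : Filter ℕ) ≤ atTop := by
      rw [← Nat.cofinite_eq_atTop]; exact hyperfilter_le_cofinite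
    exact this (eventually_ge_atTop N)
  obtain ⟨n, hn1, hn2⟩ := (h1.and h2).exists
  exact ⟨n, hn2, fun i h1 h2 => hn1 i ⟨h1, h2⟩⟩

lemma ulim2 {A : Type} [Finite A] (x y : ℕ → ℤ → A) :
    ∃ x' y' : ℤ → A, ∀ k N : ℕ, ∃ n, N ≤ n ∧ ∀ i : ℤ, -k ≤ i → i ≤ k →
      x n i = x' i ∧ y n i = y' i := by
  obtain ⟨z, hz⟩ := ulim (fun n i => (x n i, y n i))
  refine ⟨fun i => (z i).1, fun i => (z i).2, fun k N => ?_⟩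
  obtain ⟨n, hn, h⟩ := hz k N
  refine ⟨n, hn, fun i h1 h2 => ?_⟩
  have := h i h1 h2
  exact ⟨congrArg Prod.fst this, congrArg Prod.snd this⟩

section
variable {Y : Type} [MetricSpace Y] {f : Equiv.Perm Y} {A : Type} {T : A → A → Prop}
    {K : ℕ → A → A → Prop} {φ : (ℤ → A) → Y}

lemma Pres0.eq_of_K9 (h : Pres0 f A T K φ) {t t' : ℤ → A} (ht : BP T t) (ht' : BP T t')
    (hK : ∀ i, K 9 (t i) (t' i)) : φ t = φ t' := by
  by_contra hne
  obtain ⟨n, hn⟩ := h.cont _ (dist_pos.2 hne)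
  exact lt_irrefl _ (hn t t' ht ht' fun i _ _ => hK i)

lemma Pres0.K1_of_K9 (h : Pres0 f A T K φ) {t t' : ℤ → A} (ht : BP T t) (ht' : BP T t')
    (hK : ∀ i, K 9 (t i) (t' i)) : ∀ i, K 1 (t i) (t' i) :=
  h.K1 t t' ht ht' (h.eq_of_K9 ht ht' hK)

lemma Pres0.contr (h : Pres0 f A T K φ) [Finite A] : ∃ M : ℕ, ∀ (i : ℤ) (p q : ℤ → A),
    LP T p i → LP T q i → (∀ j, j ≤ i → K 9 (p j) (q j)) → ∀ j, j ≤ i - M → K 1 (p j) (q j) := by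
  by_contra hcon
  push Not at hcon
  choose i p q hp hq hpq j hj hK using hcon
  obtain ⟨x, y, hxy⟩ := ulim2 (fun n k => p n (k + j n)) (fun n k => q n (k + j n))
  have hx : BP T x := by
    intro k
    obtain ⟨n, hn, h1⟩ := hxy (k.natAbs + 1) (k.natAbs + 2)
    have h2 := h1 k (by omega) (by omega)
    have h3 := h1 (k + 1) (by omega) (by omega)
    rw [← h2.1, ← h3.1]
    have := hp n (k + j n) (by have := hj n; omega)
    rwa [show k + j n + 1 = k + 1 + j n by ring] at this
  have hy : BP T y := by
    intro k
    obtain ⟨n, hn, h1⟩ := hxy (k.natAbs + 1) (k.natAbs + 2)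
    have h2 := h1 k (by omega) (by omega)
    have h3 := h1 (k + 1) (by omega) (by omega)
    rw [← h2.2, ← h3.2]
    have := hq n (k + j n) (by have := hj n; omega)
    rwa [show k + j n + 1 = k + 1 + j n by ring] at this
  have hK9 : ∀ k, K 9 (x k) (y k) := by
    intro k
    obtain ⟨n, hn, h1⟩ := hxy (k.natAbs + 1) (k.natAbs + 2)
    have h2 := h1 k (by omega) (by omega)
    rw [← h2.1, ← h2.2]
    exact hpq n _ (by have := hj n; omega)
  have := h.K1_of_K9 hx hy hK9 0
  obtain ⟨n, hn, h1⟩ := hxy 1 1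
  have h2 := h1 0 (by omega) (by omega)
  rw [← h2.1, ← h2.2] at this
  apply hK n
  simpa using this

/-! ### Removing diamonds -/

/-- Diamond-removing transition rule. -/
def TB (T : A → A → Prop) (K : ℕ → A → A → Prop) [LT A] (u v : A × Set A) : Prop :=
  T u.1 v.1 ∧ u.1 ∉ u.2 ∧
    v.2 = {b' | K 1 b' v.1 ∧ ∃ b, T b b' ∧ (b ∈ u.2 ∨ (b = u.1 ∧ b' < v.1))}

def KB (K : ℕ → A → A → Prop) (r : ℕ) (u v : A × Set A) : Prop := K r u.1 v.1

lemma ND_TB [LinearOrder A] (h : Pres0 f A T K φ) : ND (TB T K) (KB K) := by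
  intro t t' ht ht' hpast hfut hK
  have key : ∀ t t' : ℤ → A × Set A, BP (TB T K) t → BP (TB T K) t' →
      (∃ m : ℤ, ∀ j, m ≤ j → t j = t' j) → (∀ i, KB K 9 (t i) (t' i)) →
      ∀ i, (t i).1 = (t' i).1 → ¬ (t (i + 1)).1 < (t' (i + 1)).1 := by
    intro t t' ht ht' hfut hK i hi hlt
    have K1 : ∀ i, K 1 (t i).1 (t' i).1 :=
      h.K1_of_K9 (t := fun i => (t i).1) (t' := fun i => (t' i).1)
        (fun i => (ht i).1) (fun i => (ht' i).1) hK
    have hB : ∀ n : ℕ, (t (i + 1 + n)).1 ∈ (t' (i + 1 + n)).2 := by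
      intro n
      induction n with
      | zero =>
        simp only [Nat.cast_zero, add_zero]
        rw [(ht' i).2.2]
        exact ⟨K1 _, (t' i).1, hi ▸ (ht i).1, Or.inr ⟨rfl, hlt⟩⟩
      | succ n ih =>
        have e : i + 1 + ((n + 1 : ℕ) : ℤ) = i + 1 + n + 1 := by push_cast; ring
        rw [e, (ht' _).2.2]
        exact ⟨K1 _, _, (ht _).1, Or.inl ih⟩
    obtain ⟨m, hm⟩ := hfut
    have h1 := hB (m - (i + 1)).toNat
    have h2 := hm (i + 1 + (m - (i + 1)).toNat) (by omega)
    rw [h2] at h1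
    exact (ht' _).2.1 h1
  obtain ⟨m, hm⟩ := hpast
  have hall : ∀ n : ℕ, t (m + n) = t' (m + n) := by
    intro n
    induction n with
    | zero => exact hm _ (by simp)
    | succ n ih =>
      have e : m + ((n + 1 : ℕ) : ℤ) = m + n + 1 := by push_cast; ring
      rw [e]
      have h1 := key t t' ht ht' hfut hK (m + n) (by rw [ih])
      have h2 := key t' t ht' ht (hfut.imp fun m hm j hj => (hm j hj).symm)
        (fun i => h.symm (hK i)) (m + n) (by rw [ih])
      have h3 : (t (m + n + 1)).1 = (t' (m + n + 1)).1 := le_antisymm (not_lt.1 h2) (not_lt.1 h1)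
      refine Prod.ext h3 ?_
      rw [(ht _).2.2, (ht' _).2.2, ih, h3]
  funext i
  by_cases hi : i ≤ m
  · exact hm i hi
  · have := hall (i - m).toNat
    rwa [show m + ((i - m).toNat : ℤ) = i by omega] at this

/-- Replace `t` by `q` on `[m,i]`. -/
lemma BP_glue {p q : ℤ → A} {i : ℤ} (hp : LP T p i) (hq : ∀ j, i ≤ j → T (q j) (q (j + 1)))
    (hi : p i = q i) : BP T (fun j => if j ≤ i then p j else q j) := by
  intro j
  by_cases h1 : j < i
  · have h2 : j ≤ i := h1.le
    have h3 : j + 1 ≤ i := h1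
    simp only [h2, h3, if_true]
    exact hp j h1
  · have h3 : ¬ j + 1 ≤ i := by omega
    simp only [h3, if_false]
    by_cases h2 : j ≤ i
    · have : j = i := by omega
      subst this
      simp only [le_refl, if_true, hi]
      exact hq j le_rfl
    · simp only [h2, if_false]
      exact hq j (by omega)

lemma exists_noDiamond [LinearOrder A] [Finite A] (h : Pres0 f A T K φ) (t : ℤ → A) (ht : BP T t) :
    ∃ s : ℤ → A, BP T s ∧ φ s = φ t ∧ ∀ p m i, LP T p i → m < i → (∀ j, j ≤ m → p j = s j) →
      (∀ j, j ≤ i → K 1 (p j) (s j)) → p (m + 1) < s (m + 1) → p i = s i → False := by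
  have hmin : ∀ n : ℕ, ∃ w : ℤ → A, BP T w ∧ (∀ j : ℤ, (j ≤ -(n : ℤ) ∨ (n : ℤ) ≤ j) → w j = t j) ∧
      (∀ j, K 1 (w j) (t j)) ∧ ∀ w' : ℤ → A, BP T w' → (∀ j : ℤ, (j ≤ -(n : ℤ) ∨ (n : ℤ) ≤ j) → w' j = t j) →
      (∀ j, K 1 (w' j) (t j)) →
      ¬ toLex (fun k : Fin (2 * n) => w' (-n + k)) < toLex (fun k : Fin (2 * n) => w (-n + k)) := by
    intro n
    have hwf : WellFounded ((· < ·) : Lex (Fin (2 * n) → A) → Lex (Fin (2 * n) → A) → Prop) := by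
      have : Finite (Lex (Fin (2 * n) → A)) := inferInstanceAs (Finite (Fin (2 * n) → A))
      exact Finite.wellFounded_of_trans_of_irrefl _
    have := WellFounded.has_min (InvImage.wf
      (fun w : ℤ → A => toLex (fun k : Fin (2 * n) => w (-n + k))) hwf)
      {w | BP T w ∧ (∀ j : ℤ, (j ≤ -(n : ℤ) ∨ (n : ℤ) ≤ j) → w j = t j) ∧ (∀ j, K 1 (w j) (t j))}
      ⟨t, ht, fun _ _ => rfl, fun j => h.refl _⟩
    obtain ⟨w, ⟨h1, h2, h3⟩, h4⟩ := this
    exact ⟨w, h1, h2, h3, fun w' a b c => h4 w' ⟨a, b, c⟩⟩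
  choose w hw1 hw2 hw3 hw4 using hmin
  obtain ⟨s, hs⟩ := ulim w
  have hsP : BP T s := by
    intro k
    obtain ⟨n, hn, h1⟩ := hs (k.natAbs + 1) 0
    rw [← h1 k (by omega) (by omega), ← h1 (k + 1) (by omega) (by omega)]
    exact hw1 n k
  have hsK : ∀ k, K 1 (s k) (t k) := by
    intro k
    obtain ⟨n, hn, h1⟩ := hs (k.natAbs + 1) 0
    rw [← h1 k (by omega) (by omega)]
    exact hw3 n k
  refine ⟨s, hsP, h.eq_of_K9 hsP ht fun i => h.mono (by omega) (hsK i), ?_⟩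
  intro p m i hp hmi hpast hpK hlt hpi
  obtain ⟨n, hn, h1⟩ := hs (m.natAbs + i.natAbs + 1) (m.natAbs + i.natAbs + 1)
  -- the spliced path
  let q : ℤ → A := fun j => if j ≤ i then (if j ≤ m then w n j else p j) else w n j
  have hq : BP T q := by
    refine BP_glue (p := fun j => if j ≤ m then w n j else p j) ?_ (fun j _ => hw1 n j) ?_
    · intro j hj
      by_cases h2 : j + 1 ≤ m
      · have h3 : j ≤ m := by omega
        simp only [h2, h3, if_true]
        exact hw1 n j
      · simp only [h2, if_false]
        by_cases h3 : j ≤ m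
        · have h4 : j = m := by omega
          subst h4
          simp only [le_refl, if_true]
          rw [h1 j (by omega) (by omega), ← hpast j le_rfl]
          exact hp j hj
        · simp only [h3, if_false]
          exact hp j hj
    · have h2 : ¬ i ≤ m := by omega
      simp only [h2, if_false]
      rw [h1 i (by omega) (by omega), hpi]
  have hqw : ∀ j, K 1 (q j) (w n j) := by
    intro j
    simp only [q]
    split_ifs with h2 h3
    · exact h.refl _
    · rw [h1 j (by omega) (by omega)]
      exact hpK j h2
    · exact h.refl _
  refine hw4 n q hq ?_ ?_ ?_
  · intro j hj
    rw [← hw2 n j hj]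
    simp only [q]
    split_ifs with h2 h3
    · rfl
    · omega
    · rfl
  · refine h.K1_of_K9 hq ht fun j => h.mono (by omega) (h.tri (hqw j) (hw3 n j))
  · refine ⟨⟨(m + 1 + n).toNat, by omega⟩, ?_, ?_⟩
    · intro k hk
      have hk' : (k : ℕ) < (m + 1 + n).toNat := hk
      have h2 : -(n : ℤ) + (k : ℕ) ≤ i := by omega
      have h3 : -(n : ℤ) + (k : ℕ) ≤ m := by omega
      simp only [q, Pi.toLex_apply, h2, h3, if_true]
    · have h2 : -(n : ℤ) + ((m + 1 + n).toNat : ℕ) = m + 1 := by omega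
      have h3 : m + 1 ≤ i := by omega
      have h4 : ¬ m + 1 ≤ m := by omega
      simp only [q, Pi.toLex_apply, h2, h3, h4, if_true, if_false]
      rw [h1 (m + 1) (by omega) (by omega)]
      exact hlt

lemma Pres0.toB [LinearOrder A] [Finite A] (h : Pres0 f A T K φ) :
    Pres0 f (A × Set A) (TB T K) (KB K) (fun t => φ fun i => (t i).1) where
  refl a := h.refl _
  symm := fun hK => h.symm hK
  mono := fun hr hK => h.mono hr hK
  tri := fun h1 h2 => h.tri h1 h2
  equi t ht := h.equi (fun i => (t i).1) fun i => (ht i).1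
  K1 t t' ht ht' he := h.K1 _ _ (fun i => (ht i).1) (fun i => (ht' i).1) he
  cont ε hε := by
    obtain ⟨n, hn⟩ := h.cont ε hε
    exact ⟨n, fun t t' ht ht' hK => hn _ _ (fun i => (ht i).1) (fun i => (ht' i).1) hK⟩
  surj y := by
    obtain ⟨t, ht, rfl⟩ := h.surj y
    obtain ⟨s, hs, hφ, hno⟩ := exists_noDiamond h t ht
    refine ⟨fun i => (s i, {b | ∃ p m, LP T p i ∧ m < i ∧ (∀ j, j ≤ m → p j = s j) ∧
      (∀ j, j ≤ i → K 1 (p j) (s j)) ∧ p (m + 1) < s (m + 1) ∧ p i = b}), ?_, hφ⟩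
    intro i
    refine ⟨hs i, ?_, ?_⟩
    · rintro ⟨p, m, h1, h2, h3, h4, h5, h6⟩
      exact hno p m i h1 h2 h3 h4 h5 h6
    · ext b'
      constructor
      · rintro ⟨p, m, h1, h2, h3, h4, h5, rfl⟩
        refine ⟨h4 _ le_rfl, p i, h1 i (by omega), ?_⟩
        by_cases hm : m = i
        · subst hm
          exact Or.inr ⟨h3 _ le_rfl, h5⟩
        · exact Or.inl ⟨p, m, fun j hj => h1 j (by omega), by omega, h3,
            fun j hj => h4 j (by omega), h5, rfl⟩
      · rintro ⟨hK, b, hT, hb⟩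
        rcases hb with ⟨p, m, h1, h2, h3, h4, h5, rfl⟩ | ⟨hb, hlt⟩
        · refine ⟨fun j => if j ≤ i then p j else b', m, ?_, by omega, ?_, ?_, ?_, ?_⟩
          · intro j hj
            by_cases hji : j + 1 ≤ i
            · have : j ≤ i := by omega
              simp only [hji, this, if_true]
              exact h1 j (by omega)
            · have : j = i := by omega
              subst this
              simp only [le_refl, if_true, hji, if_false]
              exact hT
          · intro j hj
            have : j ≤ i := by omega
            simp only [this, if_true]
            exact h3 j hj
          · intro j hj
            by_cases hji : j ≤ i
            · simp only [hji, if_true]; exact h4 j hji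
            · have : j = i + 1 := by omega
              subst this
              simp only [hji, if_false]; exact hK
          · have : m + 1 ≤ i := by omega
            simp only [this, if_true]
            exact h5
          · simp
        · have hb' : b = s i := hb
          subst hb'
          refine ⟨fun j => if j ≤ i then s j else b', i, ?_, by omega, ?_, ?_, ?_, ?_⟩
          · intro j hj
            by_cases hji : j + 1 ≤ i
            · have : j ≤ i := by omega
              simp only [hji, this, if_true]
              exact hs j
            · have : j = i := by omega
              subst this
              simp only [le_refl, if_true, hji, if_false]
              exact hT
          · intro j hj
            simp only [hj, if_true]
          · intro j hj
            by_cases hji : j ≤ i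
            · simp only [hji, if_true]; exact h.refl _
            · have : j = i + 1 := by omega
              subst this
              simp only [hji, if_false]; exact hK
          · simpa using hlt
          · simp

/-! ### Block presentation -/

def TC (T : A → A → Prop) (M : ℕ) (u v : Fin (M + 1) → A) : Prop :=
  (∀ j : Fin M, v j.succ = u j.castSucc) ∧ T (u 0) (v 0)

def KC (K : ℕ → A → A → Prop) (M : ℕ) (r : ℕ) (u v : Fin (M + 1) → A) : Prop :=
  ∀ j, K r (u j) (v j)

lemma TC_coord {M : ℕ} {p : ℤ → Fin (M + 1) → A} {i : ℤ} (hp : LP (TC T M) p i)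
    (j : ℕ) (hj : j < M + 1) : ∀ k, k ≤ i → p k ⟨j, hj⟩ = p (k - j) 0 := by
  induction j with
  | zero => intro k hk; simp
  | succ j ih =>
    intro k hk
    have h1 := (hp (k - 1) (by omega)).1 ⟨j, by omega⟩
    have h2 := ih (by omega) (k - 1) (by omega)
    rw [show k - 1 + 1 = k by ring] at h1
    have e1 : (⟨j + 1, hj⟩ : Fin (M + 1)) = Fin.succ ⟨j, by omega⟩ := rfl
    rw [e1, h1]
    have e2 : k - ((j + 1 : ℕ) : ℤ) = k - 1 - j := by push_cast; ring
    rw [e2, ← h2]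
    rfl

lemma BP.toLP {t : ℤ → A} (ht : BP T t) (i : ℤ) : LP T t i := fun j _ => ht j

lemma Pres0.toC (h : Pres0 f A T K φ) (M : ℕ) :
    Pres0 f (Fin (M + 1) → A) (TC T M) (KC K M) (fun t => φ fun i => t i 0) where
  refl a j := h.refl _
  symm := fun hK j => h.symm (hK j)
  mono := fun hr hK j => h.mono hr (hK j)
  tri := fun h1 h2 j => h.tri (h1 j) (h2 j)
  equi t ht := h.equi (fun i => t i 0) fun i => (ht i).2
  K1 t t' ht ht' he i j := by
    have := h.K1 _ _ (fun i => (ht i).2) (fun i => (ht' i).2) he (i - (j : ℕ))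
    rw [← TC_coord (ht.toLP i) j j.2 i le_rfl, ← TC_coord (ht'.toLP i) j j.2 i le_rfl] at this
    exact this
  cont ε hε := by
    obtain ⟨n, hn⟩ := h.cont ε hε
    exact ⟨n, fun t t' ht ht' hK => hn _ _ (fun i => (ht i).2) (fun i => (ht' i).2)
      fun i h1 h2 => hK i h1 h2 0⟩
  surj y := by
    obtain ⟨t, ht, rfl⟩ := h.surj y
    refine ⟨fun i j => t (i - (j : ℕ)), fun i => ⟨fun j => ?_, ?_⟩, ?_⟩
    · simp only [Fin.val_succ, Fin.val_castSucc]
      congr 1; push_cast; ring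
    · simpa using ht i
    · simp

lemma ND_TC (hN : ND T K) (M : ℕ) : ND (TC T M) (KC K M) := by
  intro t t' ht ht' ⟨m, hm⟩ ⟨m', hm'⟩ hK
  have := hN (fun i => t i 0) (fun i => t' i 0) (fun i => (ht i).2) (fun i => (ht' i).2)
    ⟨m, fun j hj => by rw [hm j hj]⟩ ⟨m', fun j hj => by rw [hm' j hj]⟩ (fun i => hK i 0)
  funext i j
  have h1 := TC_coord (ht.toLP i) j j.2 i le_rfl
  have h2 := TC_coord (ht'.toLP i) j j.2 i le_rfl
  have h3 := congrFun this (i - (j : ℕ))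
  calc t i j = _ := h1
    _ = _ := h3
    _ = _ := h2.symm

end

/-- The star property. -/
def Star {A : Type} (T : A → A → Prop) (K : ℕ → A → A → Prop) : Prop :=
  ∀ (i : ℤ) (r : ℕ) (p q : ℤ → A), 1 ≤ r → LP T p i → LP T q i →
    (∀ j, j ≤ i → K 9 (p j) (q j)) → K r (p i) (q i) → ∀ j, j ≤ i → K r (p j) (q j)

lemma star_TC {Y : Type} [MetricSpace Y] {f : Equiv.Perm Y} {A : Type} {T : A → A → Prop}
    {K : ℕ → A → A → Prop} {φ : (ℤ → A) → Y} (h : Pres0 f A T K φ) (M : ℕ)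
    (hM : ∀ (i : ℤ) (p q : ℤ → A),
    LP T p i → LP T q i → (∀ j, j ≤ i → K 9 (p j) (q j)) → ∀ j, j ≤ i - M → K 1 (p j) (q j)) :
    Star (TC T M) (KC K M) := by
  intro i r p q hr hp hq hK hi
  have main : ∀ n : ℕ, KC K M r (p (i - n)) (q (i - n)) := by
    intro n
    induction n with
    | zero => simpa using hi
    | succ n ih =>
      rintro ⟨j, hj⟩
      rw [TC_coord hp j hj _ (by omega), TC_coord hq j hj _ (by omega)]
      by_cases hjM : j < M
      · have := ih ⟨j + 1, by omega⟩
        rw [TC_coord hp _ _ _ (by omega), TC_coord hq _ _ _ (by omega)] at this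
        rw [show i - ((n + 1 : ℕ) : ℤ) - j = i - n - ((j + 1 : ℕ) : ℤ) by push_cast; ring]
        exact this
      · refine h.mono hr (hM i (fun k => p k 0) (fun k => q k 0) (fun k hk => (hp k hk).2)
          (fun k hk => (hq k hk).2) (fun k hk => hK k hk 0) _ (by omega))
  intro j hj
  have := main (i - j).toNat
  rwa [show i - ((i - j).toNat : ℤ) = j by omega] at this

/-- Full presentations. -/
structure Pres {Y : Type} [MetricSpace Y] (f : Equiv.Perm Y) (A : Type) (T : A → A → Prop)
    (K : ℕ → A → A → Prop) (φ : (ℤ → A) → Y) (M : ℕ) : Prop extends Pres0 f A T K φ where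
  nd : ND T K
  star : Star T K
  contr' : ∀ (i : ℤ) (p q : ℤ → A), LP T p i → LP T q i → (∀ j, j ≤ i → K 9 (p j) (q j)) →
    ∀ j, j ≤ i - M → K 1 (p j) (q j)

lemma exists_Pres {Y : Type} [MetricSpace Y] {f : Equiv.Perm Y} {A : Type} [Finite A]
    {T : A → A → Prop} {K : ℕ → A → A → Prop} {φ : (ℤ → A) → Y} (h : Pres0 f A T K φ) :
    ∃ (A' : Type) (_ : Finite A') (T' : A' → A' → Prop) (K' : ℕ → A' → A' → Prop)
      (φ' : (ℤ → A') → Y) (M : ℕ), Pres f A' T' K' φ' M := by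
  obtain ⟨n, ⟨e⟩⟩ := Finite.exists_equiv_fin A
  letI : LinearOrder A := LinearOrder.lift' e e.injective
  have hB := h.toB
  obtain ⟨M, hM⟩ := hB.contr
  have hC := hB.toC M
  obtain ⟨M', hM'⟩ := hC.contr
  exact ⟨_, inferInstance, _, _, _, M', { hC with
    nd := ND_TC (ND_TB h) M
    star := star_TC hB M hM
    contr' := hM' }⟩

section
variable {A : Type} (T : A → A → Prop) (K : ℕ → A → A → Prop)

/-- Evolution rule for leaf sets. -/
def rule (D : Set A) (a : A) : Set A := {b' | K 8 b' a ∧ ∃ b ∈ D, T b b'}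

/-- Endpoints of paths that agree with `t` up to time `n` and stay close to `t`. -/
def Seed (t : ℤ → A) (i n : ℤ) : Set A :=
  {b | ∃ p, LP T p i ∧ p i = b ∧ (∀ j, j ≤ i → K 8 (p j) (t j)) ∧ ∀ j, j ≤ n → p j = t j}

def ReachAt (i : ℤ) (u : A × Set A) : Prop :=
  ∃ t n, n ≤ i ∧ LP T t i ∧ t i = u.1 ∧ u.2 = Seed T K t i n

def Reach (u : A × Set A) : Prop := ∀ i, ReachAt T K i u

def T' (u v : A × Set A) : Prop := Reach T K u ∧ T u.1 v.1 ∧ v.2 = rule T K u.2 v.1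

def κ (u v : A × Set A) : Prop :=
  K 1 u.1 v.1 ∧ (∀ b ∈ u.2, K 4 b u.1 → b ∈ v.2) ∧ (∀ b ∈ v.2, K 4 b v.1 → b ∈ u.2)

end

section
variable {Y : Type} [MetricSpace Y] {f : Equiv.Perm Y} {A : Type} {T : A → A → Prop}
    {K : ℕ → A → A → Prop} {φ : (ℤ → A) → Y} {M : ℕ}

lemma LP.mono {p : ℤ → A} {i j : ℤ} (hp : LP T p i) (h : j ≤ i) : LP T p j :=
  fun k hk => hp k (by omega)

lemma LP.shift {p : ℤ → A} {i : ℤ} (hp : LP T p i) (c : ℤ) :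
    LP T (fun k => p (k + c)) (i - c) := by
  intro k hk
  have := hp (k + c) (by omega)
  rwa [show k + c + 1 = k + 1 + c by ring] at this

lemma Seed_shift (t : ℤ → A) (i n c : ℤ) :
    Seed T K t i n ⊆ Seed T K (fun k => t (k + c)) (i - c) (n - c) := by
  rintro b ⟨p, h1, h2, h3, h4⟩
  refine ⟨fun k => p (k + c), h1.shift c, by simpa using h2, fun j hj => h3 _ (by omega),
    fun j hj => h4 _ (by omega)⟩

lemma reach_of_reachAt {i : ℤ} {u : A × Set A} (h : ReachAt T K i u) : Reach T K u := by
  intro i'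
  obtain ⟨t, n, h1, h2, h3, h4⟩ := h
  refine ⟨fun k => t (k + (i - i')), n - (i - i'), by omega, ?_, by simpa using h3, ?_⟩
  · have := h2.shift (i - i')
    rwa [show i - (i - i') = i' by ring] at this
  · rw [h4]
    apply Set.Subset.antisymm
    · have := Seed_shift (T := T) (K := K) t i n (i - i')
      rwa [show i - (i - i') = i' by ring] at this
    · have := Seed_shift (T := T) (K := K) (fun k => t (k + (i - i'))) i' (n - (i - i')) (i' - i)
      have e : (fun k => t (k + (i' - i) + (i - i'))) = t := by
        funext k; congr 1; ring
      rw [e, show i' - (i' - i) = i by ring, show n - (i - i') - (i' - i) = n by ring] at this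
      exact this

lemma LP.snoc {p : ℤ → A} {i : ℤ} (hp : LP T p i) {b : A} (hb : T (p i) b) :
    LP T (fun k => if k ≤ i then p k else b) (i + 1) := by
  intro j hj
  by_cases hji : j + 1 ≤ i
  · have : j ≤ i := by omega
    simp only [hji, this, if_true]
    exact hp j (by omega)
  · have : j = i := by omega
    subst this
    simp only [le_refl, if_true, hji, if_false]
    exact hb

/-- Gluing at a common point. -/
lemma LP.glue {p q : ℤ → A} {m i : ℤ} (hp : LP T p m) (hq : LP T q i) (hm : p m = q m) :
    LP T (fun k => if k ≤ m then p k else q k) i := by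
  intro j hj
  by_cases h1 : j < m
  · have h2 : j ≤ m := h1.le
    have h3 : j + 1 ≤ m := h1
    simp only [h2, h3, if_true]
    exact hp j h1
  · have h3 : ¬ j + 1 ≤ m := by omega
    simp only [h3, if_false]
    by_cases h2 : j ≤ m
    · have : j = m := by omega
      subst this
      simp only [le_refl, if_true, hm]
      exact hq j hj
    · simp only [h2, if_false]
      exact hq j hj

lemma Reach.step {u : A × Set A} (hu : Reach T K u) {b : A} (hb : T u.1 b)
    (hr : ∀ a, K 8 a a) : Reach T K (b, rule T K u.2 b) := by
  obtain ⟨t, n, h1, h2, h3, h4⟩ := hu 0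
  refine reach_of_reachAt (i := 1) ⟨fun k => if k ≤ 0 then t k else b, n, by omega,
    h2.snoc (h3 ▸ hb), by simp, ?_⟩
  ext b'
  constructor
  · rintro ⟨hK, c, hc, hT⟩
    rw [h4] at hc
    obtain ⟨p, g1, rfl, g3, g4⟩ := hc
    refine ⟨fun k => if k ≤ 0 then p k else b', g1.snoc hT, by simp, ?_, ?_⟩
    · intro j hj
      by_cases h : j ≤ 0
      · simp only [h, if_true]; exact g3 j h
      · simp only [h, if_false]; exact hK
    · intro j hj
      have : j ≤ 0 := by omega
      simp only [this, if_true]; exact g4 j hj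
  · rintro ⟨p, g1, rfl, g3, g4⟩
    refine ⟨by simpa using g3 1 le_rfl, p 0, ?_, g1 0 (by omega)⟩
    rw [h4]
    refine ⟨p, g1.mono (by omega), rfl, fun j hj => ?_, fun j hj => ?_⟩
    · simpa [hj] using g3 j (by omega)
    · have : j ≤ 0 := by omega
      simpa [this] using g4 j hj

lemma Reach.mem {u : A × Set A} (hu : Reach T K u) (hr : ∀ a, K 8 a a) : u.1 ∈ u.2 := by
  obtain ⟨t, n, h1, h2, h3, h4⟩ := hu 0
  rw [h4]
  exact ⟨t, h2, h3, fun j _ => hr _, fun j _ => rfl⟩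

variable {x y : ℤ → A × Set A}

lemma back_path (hx : BP (T' T K) x) {i : ℤ} {b : A} (hb : b ∈ (x i).2) :
    ∃ p, LP T p i ∧ p i = b ∧ ∀ j, j ≤ i → p j ∈ (x j).2 := by
  have step : ∀ (k : ℤ) (c : {c // c ∈ (x k).2}), ∃ d : {c // c ∈ (x (k - 1)).2}, T d.1 c.1 := by
    rintro k ⟨c, hc⟩
    have := (hx (k - 1)).2.2
    rw [show k - 1 + 1 = k by ring] at this
    rw [this] at hc
    obtain ⟨-, d, hd, hT⟩ := hc
    exact ⟨⟨d, hd⟩, hT⟩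
  choose s hs using step
  have e : ∀ n : ℕ, i - ((n + 1 : ℕ) : ℤ) = i - n - 1 := fun n => by push_cast; ring
  let g : ∀ n : ℕ, {c // c ∈ (x (i - n)).2} := fun n => Nat.rec ⟨b, by simpa using hb⟩
    (fun n c => ⟨(s (i - n) c).1, by rw [e n]; exact (s (i - n) c).2⟩) n
  have hg : ∀ n, T (g (n + 1)).1 (g n).1 := fun n => hs (i - n) (g n)
  obtain ⟨G, hG0, hGm, hGT⟩ : ∃ G : ℕ → A, G 0 = b ∧ (∀ n : ℕ, G n ∈ (x (i - n)).2) ∧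
      ∀ n, T (G (n+1)) (G n) := ⟨fun n => (g n).1, rfl, fun n => (g n).2, hg⟩
  refine ⟨fun k => G (i - k).toNat, ?_, ?_, ?_⟩
  · intro j hj
    have : (i - j).toNat = (i - (j + 1)).toNat + 1 := by omega
    simp only [this]
    exact hGT _
  · simpa using hG0
  · intro j hj
    have := hGm (i - j).toNat
    rwa [show i - ((i - j).toNat : ℤ) = j by omega] at this

lemma mem_K8 (hx : BP (T' T K) x) {i : ℤ} {b : A} (hb : b ∈ (x i).2) : K 8 b (x i).1 := by
  have := (hx (i - 1)).2.2
  rw [show i - 1 + 1 = i by ring] at this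
  rw [this] at hb
  exact hb.1

lemma bp_fst (hx : BP (T' T K) x) : BP T (fun i => (x i).1) := fun i => (hx i).2.1

lemma self_mem (h : Pres f A T K φ M) (hx : BP (T' T K) x) (i : ℤ) : (x i).1 ∈ (x i).2 :=
  (hx i).1.mem fun a => h.mono (by omega) (h.refl a)

lemma back_path' (h : Pres f A T K φ M) (hx : BP (T' T K) x) {i : ℤ} {b : A} (hb : b ∈ (x i).2) {r : ℕ} (hr : 1 ≤ r)
    (hK : K r b (x i).1) :
    ∃ p, LP T p i ∧ p i = b ∧ (∀ j, j ≤ i → p j ∈ (x j).2) ∧ ∀ j, j ≤ i → K r (p j) (x j).1 := by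
  obtain ⟨p, h1, rfl, h3⟩ := back_path hx hb
  exact ⟨p, h1, rfl, h3, h.star i r p (fun j => (x j).1) hr h1 ((bp_fst hx).toLP i)
    (fun j hj => h.mono (by omega) (mem_K8 hx (h3 j hj))) hK⟩

lemma fwd (hx : BP (T' T K) x) {p : ℤ → A} {m i : ℤ} (hp : LP T p i) (hm : p m ∈ (x m).2)
    (hK : ∀ j, m < j → j ≤ i → K 8 (p j) (x j).1) : ∀ j, m ≤ j → j ≤ i → p j ∈ (x j).2 := by
  have : ∀ n : ℕ, m + n ≤ i → p (m + n) ∈ (x (m + n)).2 := by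
    intro n
    induction n with
    | zero => intro _; simpa using hm
    | succ n ih =>
      intro hn
      push_cast at hn
      rw [show m + ((n + 1 : ℕ) : ℤ) = m + n + 1 by push_cast; ring, (hx (m + n)).2.2]
      exact ⟨hK _ (by omega) (by omega), _, ih (by omega), hp _ (by omega)⟩
  intro j h1 h2
  have := this (j - m).toNat (by omega)
  rwa [show m + ((j - m).toNat : ℤ) = j by omega] at this

/-- Contraction applied to leaf paths. -/
lemma leaf_contr (h : Pres f A T K φ M) (hx : BP (T' T K) x) {i : ℤ} {p : ℤ → A} (hp : LP T p i)
    (hK : ∀ j, j ≤ i → K 9 (p j) (x j).1) : ∀ j, j ≤ i - M → K 1 (p j) (x j).1 :=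
  h.contr' i p (fun j => (x j).1) hp ((bp_fst hx).toLP i) hK

lemma lemU_half (h : Pres f A T K φ M) (hx : BP (T' T K) x) (hy : BP (T' T K) y)
    (hK : ∀ i, K 1 (x i).1 (y i).1) (m : ℤ)
    (hm : ∀ j, j ≤ m → ∀ b ∈ (x j).2, K 1 b (x j).1 → b ∈ (y j).2) (i : ℤ) :
    ∀ b ∈ (x i).2, K 4 b (x i).1 → b ∈ (y i).2 := by
  intro b hb hKb
  obtain ⟨p, h1, rfl, h3, h4⟩ := back_path' h hx hb (by omega) hKb
  have hc := leaf_contr h hx h1 fun j hj => h.mono (by omega) (h4 j hj)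
  have h5 : p (min m (i - M)) ∈ (y (min m (i - M))).2 :=
    hm _ (min_le_left _ _) _ (h3 _ (by omega)) (hc _ (min_le_right _ _))
  exact fwd hy h1 h5 (fun j _ hj => h.mono (by omega) (h.tri (h4 j hj) (hK j))) i (by omega) le_rfl

lemma κ_symm (h : Pres f A T K φ M) {u v : A × Set A} (huv : κ K u v) : κ K v u := ⟨h.symm huv.1, huv.2.2, huv.2.1⟩

lemma κ_refl (h : Pres f A T K φ M) (u : A × Set A) : κ K u u := ⟨h.refl _, fun _ h _ => h, fun _ h _ => h⟩

lemma lemU (h : Pres f A T K φ M) (hx : BP (T' T K) x) (hy : BP (T' T K) y)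
    (hK : ∀ i, K 1 (x i).1 (y i).1) (m : ℤ)
    (hm : ∀ j, j ≤ m → κ K (x j) (y j)) (i : ℤ) : κ K (x i) (y i) :=
  ⟨hK i, lemU_half h hx hy hK m (fun j hj b hb hKb => (hm j hj).2.1 b hb (h.mono (by omega) hKb)) i,
    lemU_half h hy hx (fun i => h.symm (hK i)) m
      (fun j hj b hb hKb => (hm j hj).2.2 b hb (h.mono (by omega) hKb)) i⟩

lemma κ_comp_inf (h : Pres f A T K φ M) (hx : BP (T' T K) x) (hy : BP (T' T K) y)
    (hK : ∀ i, ∃ v, κ K (x i) v ∧ κ K v (y i)) (i : ℤ) : κ K (x i) (y i) := by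
  have h1 : ∀ i, K 1 (x i).1 (y i).1 :=
    h.K1_of_K9 (bp_fst hx) (bp_fst hy) fun i => by
      obtain ⟨v, h1, h2⟩ := hK i
      exact h.mono (by omega) (h.tri h1.1 h2.1)
  refine ⟨h1 i, lemU_half h hx hy h1 0 ?_ i, lemU_half h hy hx (fun i => h.symm (h1 i)) 0 ?_ i⟩
  · intro j _ b hb hKb
    obtain ⟨v, h1, h2⟩ := hK j
    exact h2.2.1 _ (h1.2.1 b hb (h.mono (by omega) hKb)) (h.mono (by omega) (h.tri hKb h1.1))
  · intro j _ b hb hKb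
    obtain ⟨v, h1, h2⟩ := hK j
    exact h1.2.2 _ (h2.2.2 b hb (h.mono (by omega) hKb))
      (h.mono (by omega) (h.tri hKb (h.symm h2.1)))

lemma BP_lim {B : Type} {R : B → B → Prop} {z : ℕ → ℤ → B} {z' : ℤ → B} (hz : ∀ n, BP R (z n))
    (hlim : ∀ k N : ℕ, ∃ n, N ≤ n ∧ ∀ i : ℤ, -k ≤ i → i ≤ k → z n i = z' i) : BP R z' := by
  intro i
  obtain ⟨n, -, hn⟩ := hlim (i.natAbs + 1) 0
  rw [← hn i (by omega) (by omega), ← hn (i + 1) (by omega) (by omega)]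
  exact hz n i

lemma κ_comp (h : Pres f A T K φ M) [Finite A] (n : ℕ) : ∃ m : ℕ, ∀ x y, BP (T' T K) x → BP (T' T K) y →
    (∀ i : ℤ, -m ≤ i → i ≤ m → ∃ v, κ K (x i) v ∧ κ K v (y i)) →
    ∀ i : ℤ, -n ≤ i → i ≤ n → κ K (x i) (y i) := by
  by_contra hcon
  push Not at hcon
  choose x y hx hy hK i hi1 hi2 hi3 using hcon
  obtain ⟨x', y', hlim⟩ := ulim2 x y
  have hx' : BP (T' T K) x' := BP_lim hx fun k N => (hlim k N).imp fun n hn =>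
    ⟨hn.1, fun i h1 h2 => (hn.2 i h1 h2).1⟩
  have hy' : BP (T' T K) y' := BP_lim hy fun k N => (hlim k N).imp fun n hn =>
    ⟨hn.1, fun i h1 h2 => (hn.2 i h1 h2).2⟩
  have := κ_comp_inf h hx' hy' (by
    intro j
    obtain ⟨m, hm, hm'⟩ := hlim (j.natAbs) (j.natAbs)
    obtain ⟨e1, e2⟩ := hm' j (by omega) (by omega)
    rw [← e1, ← e2]
    exact hK m j (by omega) (by omega))
  obtain ⟨m, -, hm'⟩ := hlim n 0
  obtain ⟨e1, e2⟩ := hm' (i m) (hi1 m) (hi2 m)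
  apply hi3 m
  rw [e1, e2]
  exact this _

/-- The recentered leaf. -/
lemma bracket (h : Pres f A T K φ M) (hx : BP (T' T K) x) (hy : BP (T' T K) y) (s : ℤ)
    (hxy : ∀ i, s - M ≤ i → i ≤ s → κ K (x i) (y i)) :
    ∃ z, BP (T' T K) z ∧ (∀ j, j ≤ s → κ K (z j) (y j)) ∧ (∀ j, s ≤ j → κ K (z j) (x j)) := by
  have hr8 : ∀ a, K 8 a a := fun a => h.mono (by omega) (h.refl a)
  have hts : (x s).1 ∈ (y s).2 := (hxy s (by omega) le_rfl).2.1 _ (self_mem h hx s)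
    (h.mono (by omega) (h.refl _))
  obtain ⟨r0, hr0, hr0s, hr0D, hr0K⟩ := back_path' h hy hts le_rfl (hxy s (by omega) le_rfl).1
  obtain ⟨r, hr⟩ : ∃ r : ℤ → A, r = fun j => if j ≤ s then r0 j else (x j).1 := ⟨_, rfl⟩
  have hrl : ∀ j, j ≤ s → r j = r0 j := fun j hj => by simp [hr, hj]
  have hrr : ∀ j, s ≤ j → r j = (x j).1 := fun j hj => by
    by_cases e : j ≤ s
    · have : j = s := by omega
      subst this; rw [hrl _ le_rfl, hr0s]
    · simp [hr, e]
  have hrP : BP T r := by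
    rw [hr]; exact BP_glue hr0 (fun j _ => (hx j).2.1) hr0s
  have hrD : ∀ j, j ≤ s → r j ∈ (y j).2 := fun j hj => by rw [hrl j hj]; exact hr0D j hj
  have hrK : ∀ j, j ≤ s → K 1 (r j) (y j).1 := fun j hj => by rw [hrl j hj]; exact hr0K j hj
  obtain ⟨B, hB⟩ : ∃ B : ℤ → Set A, ∀ i b, b ∈ B i ↔ ∃ p, LP T p i ∧ p i = b ∧
      (∀ j, j ≤ i → K 8 (p j) (r j)) ∧ ∃ n, ∀ j, j ≤ n → p j ∈ (y j).2 :=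
    ⟨fun i => {b | _}, fun i b => Iff.rfl⟩
  have hBrule : ∀ i, B (i + 1) = rule T K (B i) (r (i + 1)) := by
    intro i
    ext b'
    constructor
    · intro hb
      obtain ⟨p, h1, rfl, h3, h4⟩ := (hB _ _).1 hb
      exact ⟨h3 _ le_rfl, p i, (hB _ _).2 ⟨p, h1.mono (by omega), rfl,
        fun j hj => h3 j (by omega), h4⟩, h1 i (by omega)⟩
    · rintro ⟨hK, b, hb, hT⟩
      obtain ⟨p, h1, rfl, h3, n, h4⟩ := (hB _ _).1 hb
      refine (hB _ _).2 ⟨_, h1.snoc hT, by simp, ?_, min n i, ?_⟩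
      · intro j hj
        by_cases e : j ≤ i
        · simp only [e, if_true]; exact h3 j e
        · have : j = i + 1 := by omega
          subst this
          simp only [e, if_false]; exact hK
      · intro j hj
        have : j ≤ i := by omega
        simp only [this, if_true]
        exact h4 j (by omega)
  -- paths in `B`, before time `s`, close to `r`, lie in the leaf of `y`
  have hBy : ∀ i, i ≤ s → ∀ p, LP T p i → (∀ j, j ≤ i → K 7 (p j) (r j)) →
      (∃ n, ∀ j, j ≤ n → p j ∈ (y j).2) → ∀ j, j ≤ i → p j ∈ (y j).2 := by
    rintro i hi p hp hK ⟨n, hn⟩ j hj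
    exact fwd hy (m := min n j) (hp.mono hj) (hn _ (by omega))
      (fun k _ hk => h.tri (hK k (by omega)) (hrK k (by omega))) j (by omega) le_rfl
  have hstar : ∀ i (q p : ℤ → A) (e : ℕ), 1 ≤ e → LP T p i → LP T q i →
      (∀ j, j ≤ i → K 8 (p j) (q j)) → K e (p i) (q i) → ∀ j, j ≤ i → K e (p j) (q j) :=
    fun i q p e he hp hq hK hi => h.star i e p q he hp hq (fun j hj => h.mono (by omega) (hK j hj)) hi
  have hcon : ∀ i (q p : ℤ → A), LP T p i → LP T q i →
      (∀ j, j ≤ i → K 8 (p j) (q j)) → ∀ j, j ≤ i - M → K 1 (p j) (q j) :=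
    fun i q p hp hq hK => h.contr' i p q hp hq (fun j hj => h.mono (by omega) (hK j hj))
  have hreach : ∀ j, j ≤ s → Reach T K (r j, B j) := by
    intro j hj
    apply reach_of_reachAt (i := j)
    obtain ⟨t, n, g1, g2, g3, g4⟩ := (hy (j - M)).1 (j - M)
    have hm : r (j - M) ∈ (y (j - M)).2 := hrD _ (by omega)
    rw [g4] at hm
    obtain ⟨q, q1, q2, q3, q4⟩ := hm
    have hqt : ∀ k, k ≤ j - M → K 1 (q k) (t k) := hstar _ t q 1 le_rfl q1 g2 q3
      (by rw [q2, g3]; exact hrK _ (by omega))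
    obtain ⟨r', hr'⟩ : ∃ r' : ℤ → A, r' = fun k => if k ≤ j - M then q k else r k := ⟨_, rfl⟩
    have r'l : ∀ k, k ≤ j - M → r' k = q k := fun k hk => by simp [hr', hk]
    have r'r : ∀ k, j - M ≤ k → r' k = r k := fun k hk => by
      by_cases e : k ≤ j - M
      · have : k = j - M := by omega
        subst this; rw [r'l _ le_rfl, q2]
      · simp [hr', e]
    have r'P : LP T r' j := by rw [hr']; exact q1.glue (hrP.toLP j) q2
    refine ⟨r', n, by omega, r'P, r'r j (by omega), ?_⟩
    ext b
    constructor
    · intro hb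
      obtain ⟨p, p1, rfl, p3, p4⟩ := (hB _ _).1 hb
      have pc := hcon j r p p1 (hrP.toLP j) p3
      have pD : p (j - M) ∈ (y (j - M)).2 := hBy (j - M) (by omega) p (p1.mono (by omega))
        (fun k hk => h.mono (by omega) (pc k hk)) p4 _ le_rfl
      rw [g4] at pD
      obtain ⟨w, w1, w2, w3, w4⟩ := pD
      have wt : ∀ k, k ≤ j - M → K 2 (w k) (t k) := hstar _ t w 2 (by omega) w1 g2 w3
        (by rw [w2, g3]; exact h.tri (pc _ le_rfl) (hrK _ (by omega)))
      refine ⟨_, w1.glue p1 w2, ?_, ?_, ?_⟩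
      · by_cases e : j ≤ j - M
        · have e' : j = j - M := by omega
          simp only [e, if_true]
          rw [e', w2, ← e']
        · simp only [e, if_false]
      · intro k hk
        by_cases e : k ≤ j - M
        · simp only [e, if_true]
          rw [r'l k e]
          exact h.mono (by omega) (h.tri (wt k e) (h.symm (hqt k e)))
        · simp only [e, if_false]
          rw [r'r k (by omega)]
          exact p3 k hk
      · intro k hk
        have e : k ≤ j - M := by omega
        simp only [e, if_true]
        rw [r'l k e, w4 k hk, q4 k hk]
    · rintro ⟨p, p1, rfl, p3, p4⟩
      have pc := hcon j r' p p1 r'P p3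
      have pD : p (j - M) ∈ (y (j - M)).2 := by
        rw [g4]
        refine ⟨p, p1.mono (by omega), rfl, fun k hk => ?_, fun k hk => ?_⟩
        · have := pc k hk
          rw [r'l k hk] at this
          exact h.mono (by omega) (h.tri this (hqt k hk))
        · rw [p4 k hk, r'l k (by omega), q4 k hk]
      have pr : K 1 (p (j - M)) (r (j - M)) := by
        have := pc _ le_rfl
        rwa [r'r _ le_rfl] at this
      obtain ⟨w, w1, w2, w3, w4⟩ := back_path' h hy pD (r := 2) (by omega)
        (h.tri pr (hrK _ (by omega)))
      refine (hB _ _).2 ⟨_, w1.glue p1 w2, ?_, ?_, j - M, ?_⟩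
      · by_cases e : j ≤ j - M
        · have e' : j = j - M := by omega
          simp only [e, if_true]
          rw [e', w2, ← e']
        · simp only [e, if_false]
      · intro k hk
        by_cases e : k ≤ j - M
        · simp only [e, if_true]
          exact h.mono (by omega) (h.tri (w4 k e) (h.symm (hrK k (by omega))))
        · simp only [e, if_false]
          have := p3 k hk
          rwa [r'r k (by omega)] at this
      · intro k hk
        simp only [hk, if_true]
        exact w3 k hk
  have hreach' : ∀ j, Reach T K (r j, B j) := by
    have : ∀ n : ℕ, Reach T K (r (s + n), B (s + n)) := by
      intro n
      induction n with
      | zero => simpa using hreach s le_rfl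
      | succ n ih =>
        rw [show s + ((n + 1 : ℕ) : ℤ) = s + n + 1 by push_cast; ring, hBrule]
        exact ih.step (hrP _) hr8
    intro j
    by_cases hj : j ≤ s
    · exact hreach j hj
    · have := this (j - s).toNat
      rwa [show s + ((j - s).toNat : ℤ) = j by omega] at this
  have hz : BP (T' T K) (fun i => (r i, B i)) := fun i => ⟨hreach' i, hrP i, hBrule i⟩
  refine ⟨fun i => (r i, B i), hz, ?_, ?_⟩
  · intro j hj
    refine ⟨hrK j hj, ?_, ?_⟩
    · intro b hb hKb
      obtain ⟨p, p1, rfl, p3, p4⟩ := (hB _ _).1 hb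
      have := hstar j r p 4 (by omega) p1 (hrP.toLP j) p3 hKb
      exact hBy j hj p p1 (fun k hk => h.mono (by omega) (this k hk)) p4 j le_rfl
    · intro b hb hKb
      obtain ⟨p, p1, rfl, p3, p4⟩ := back_path' h hy hb (by omega) hKb
      exact (hB _ _).2 ⟨p, p1, rfl, fun k hk => h.mono (by omega)
        (h.tri (p4 k hk) (h.symm (hrK k (by omega)))), j, p3⟩
  · intro j hj
    refine ⟨by simp only [hrr j hj]; exact h.refl _, ?_, ?_⟩
    · intro b hb hKb
      obtain ⟨p, p1, rfl, p3, p4⟩ := (hB _ _).1 hb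
      have pK := hstar j r p 4 (by omega) p1 (hrP.toLP j) p3 hKb
      have pc := hcon j r p p1 (hrP.toLP j) p3
      have pD := hBy (s - M) (by omega) p (p1.mono (by omega))
        (fun k hk => h.mono (by omega) (pc k (by omega))) p4 _ le_rfl
      have pD' : p (s - M) ∈ (x (s - M)).2 := (hxy _ le_rfl (by omega)).2.2 _ pD
        (h.mono (by omega) (h.tri (pc _ (by omega)) (hrK _ (by omega))))
      refine fwd hx p1 pD' (fun k hk1 hk2 => ?_) j (by omega) le_rfl
      by_cases hks : k ≤ s
      · exact h.mono (by omega) (h.tri (h.tri (pK k hk2) (hrK k hks))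
          (h.symm (hxy k hk1.le hks).1))
      · have := pK k hk2
        rw [hrr k (by omega)] at this
        exact h.mono (by omega) this
    · intro b hb hKb
      obtain ⟨p, p1, rfl, p3, p4⟩ := back_path' h hx hb (by omega) hKb
      have pc := leaf_contr h hx p1 fun k hk => h.mono (by omega) (p4 k hk)
      have pD : p (s - M) ∈ (y (s - M)).2 := (hxy _ le_rfl (by omega)).2.1 _ (p3 _ (by omega))
        (h.mono (by omega) (pc _ (by omega)))
      obtain ⟨w, w1, w2, w3, w4⟩ := back_path' h hy pD (r := 2) (by omega)
        (h.tri (pc _ (by omega)) (hxy _ le_rfl (by omega)).1)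
      refine (hB _ _).2 ⟨_, w1.glue p1 w2, ?_, ?_, s - M, ?_⟩
      · by_cases e : j ≤ s - M
        · have e' : j = s - M := by omega
          simp only [e, if_true]
          rw [e', w2]
        · simp only [e, if_false]
      · intro k hk
        by_cases e : k ≤ s - M
        · simp only [e, if_true]
          exact h.mono (by omega) (h.tri (w4 k e) (h.symm (hrK k (by omega))))
        · simp only [e, if_false]
          by_cases hks : k ≤ s
          · exact h.mono (by omega) (h.tri (h.tri (p4 k hk) (hxy k (by omega) hks).1)
              (h.symm (hrK k hks)))
          · rw [hrr k (by omega)]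
            exact h.mono (by omega) (p4 k hk)
      · intro k hk
        simp only [hk, if_true]
        exact w3 k hk

/-- Every path lifts. -/
lemma lift_path (h : Pres f A T K φ M) [Finite A] {t : ℤ → A} (ht : BP T t) :
    ∃ x, BP (T' T K) x ∧ ∀ i, (x i).1 = t i := by
  have hr8 : ∀ a, K 8 a a := fun a => h.mono (by omega) (h.refl a)
  refine ⟨fun i => (t i, {b | ∃ n, b ∈ Seed T K t i n}), ?_, fun i => rfl⟩
  intro i
  refine ⟨?_, ht i, ?_⟩
  · apply reach_of_reachAt (i := i)
    have hmono : ∀ n n', n' ≤ n → Seed T K t i n ⊆ Seed T K t i n' := by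
      rintro n n' hn b ⟨p, p1, p2, p3, p4⟩
      exact ⟨p, p1, p2, p3, fun j hj => p4 j (by omega)⟩
    have hfin : {b | ∃ n, b ∈ Seed T K t i n}.Finite := Set.toFinite _
    have : ∃ n, n ≤ i ∧ ∀ b ∈ {b | ∃ n, b ∈ Seed T K t i n}, b ∈ Seed T K t i n := by
      have key : ∀ b : A, ∃ n, n ≤ i ∧ ((∃ n, b ∈ Seed T K t i n) → b ∈ Seed T K t i n) := by
        intro b
        by_cases hb : ∃ n, b ∈ Seed T K t i n
        · obtain ⟨n, hn⟩ := hb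
          exact ⟨min n i, by omega, fun _ => hmono n _ (by omega) hn⟩
        · exact ⟨i, le_rfl, fun h => absurd h hb⟩
      choose g hg1 hg2 using key
      obtain ⟨n0, hn0⟩ := (Set.finite_range g).bddBelow
      refine ⟨min n0 i, by omega, fun b hb => hmono (g b) _ ?_ (hg2 b hb)⟩
      have := hn0 ⟨b, rfl⟩
      omega
    obtain ⟨n, hn, hn'⟩ := this
    exact ⟨t, n, hn, ht.toLP i, rfl, Set.Subset.antisymm hn' fun b hb => ⟨n, hb⟩⟩
  · ext b'
    constructor
    · rintro ⟨n, p, p1, rfl, p3, p4⟩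
      exact ⟨p3 _ le_rfl, p i, ⟨n, p, p1.mono (by omega), rfl, fun j hj => p3 j (by omega), p4⟩,
        p1 i (by omega)⟩
    · rintro ⟨hK, b, ⟨n, p, p1, rfl, p3, p4⟩, hT⟩
      refine ⟨min n i, _, p1.snoc hT, by simp, ?_, ?_⟩
      · intro j hj
        by_cases e : j ≤ i
        · simp only [e, if_true]; exact p3 j e
        · have : j = i + 1 := by omega
          subst this
          simp only [e, if_false]; exact hK
      · intro j hj
        have : j ≤ i := by omega
        simp only [this, if_true]
        exact p4 j (by omega)

lemma s_inj (h : Pres f A T K φ M) (hx : BP (T' T K) x) (hy : BP (T' T K) y) (hκ : ∀ i, κ K (x i) (y i)) (m : ℤ)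
    (hm : ∀ j, m ≤ j → x j = y j) : x = y := by
  have h1 : ∀ j, (x j).1 = (y j).1 := by
    intro j
    have hmem : (y j).1 ∈ (x j).2 := (hκ j).2.2 _ (self_mem h hy j) (h.mono (by omega) (h.refl _))
    obtain ⟨t, n, g1, g2, g3, g4⟩ := (hx j).1 j
    rw [g4] at hmem
    obtain ⟨p, p1, p2, p3, p4⟩ := hmem
    have := h.nd _ _ (BP_glue (q := fun k => (y k).1) p1 (fun k _ => bp_fst hy k) p2)
      (BP_glue (q := fun k => (x k).1) g2 (fun k _ => bp_fst hx k) g3)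
      ⟨n, fun k hk => by
        have : k ≤ j := by omega
        simp only [this, if_true]
        exact p4 k hk⟩
      ⟨max m (j + 1), fun k hk => by
        have : ¬ k ≤ j := by omega
        simp only [this, if_false]
        rw [hm k (by omega)]⟩
      (fun k => by
        by_cases e : k ≤ j
        · simp only [e, if_true]
          exact h.mono (by omega) (p3 k e)
        · simp only [e, if_false]
          exact h.mono (by omega) (h.symm (hκ k).1))
    have := congrFun this j
    simp only [le_refl, if_true] at this
    rw [← g3, ← this, p2]
  have key : ∀ x y : ℤ → A × Set A, BP (T' T K) x → BP (T' T K) y → (∀ i, κ K (x i) (y i)) →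
      (∀ j, (x j).1 = (y j).1) → ∀ i, (x i).2 ⊆ (y i).2 := by
    intro x y hx hy hκ h1 i b hb
    obtain ⟨p, p1, rfl, p3⟩ := back_path hx hb
    have pc := leaf_contr h hx p1 fun k hk => h.mono (by omega) (mem_K8 hx (p3 k hk))
    exact fwd hy p1 ((hκ _).2.1 _ (p3 (i - M) (by omega)) (h.mono (by omega) (pc _ le_rfl)))
      (fun k _ hk => by rw [← h1]; exact mem_K8 hx (p3 k hk)) i (by omega) le_rfl
  funext i
  exact Prod.ext (h1 i) (Set.Subset.antisymm (key x y hx hy hκ h1 i)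
    (key y x hy hx (fun i => κ_symm h (hκ i)) (fun j => (h1 j).symm) i))

end
/-! ### From finitely presented systems to presentations -/

lemma continuous_zpow_perm {Y : Type} [TopologicalSpace Y] {f : Equiv.Perm Y} (h1 : Continuous f)
    (h2 : Continuous f.symm) (n : ℤ) : Continuous (f ^ n : Equiv.Perm Y) := by
  induction n using Int.induction_on with
  | zero => simpa using continuous_id
  | succ n ih =>
    rw [zpow_add_one]
    exact ih.comp h1
  | pred n ih =>
    rw [zpow_sub_one]
    exact ih.comp h2

lemma zpow_of_step {Y : Type} (f : Equiv.Perm Y) (g : ℤ → Y) (hg : ∀ n, g (n + 1) = f (g n))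
    (n : ℤ) : (f ^ n) (g 0) = g n := by
  induction n using Int.induction_on with
  | zero => simp
  | succ n ih =>
    rw [add_comm, zpow_one_add, Equiv.Perm.mul_apply, ih, ← hg, add_comm]
  | pred n ih =>
    rw [sub_eq_neg_add, zpow_add, Equiv.Perm.mul_apply, ih, zpow_neg_one, Equiv.Perm.inv_eq_iff_eq,
      ← hg]
    congr 1; ring

lemma expansive_unif {Y : Type} [MetricSpace Y] [CompactSpace Y] {f : Equiv.Perm Y}
    (h1 : Continuous f) (h2 : Continuous f.symm) {c : ℝ} (hc : Expansive f c) (ε : ℝ) (hε : 0 < ε) :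
    ∃ n : ℕ, ∀ y y' : Y, (∀ i : ℤ, -n ≤ i → i ≤ n → dist ((f ^ i) y) ((f ^ i) y') ≤ c) →
      dist y y' < ε := by
  by_contra hcon
  push Not at hcon
  choose y y' hy hd using hcon
  obtain ⟨⟨a, b⟩, g, hg, hlim⟩ := CompactSpace.tendsto_subseq (fun n => (y n, y' n))
  have ha : Tendsto (fun n => y (g n)) atTop (𝓝 a) := (continuous_fst.tendsto _).comp hlim
  have hb : Tendsto (fun n => y' (g n)) atTop (𝓝 b) := (continuous_snd.tendsto _).comp hlim
  have hab : ε ≤ dist a b := ge_of_tendsto' (ha.dist hb) fun n => hd _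
  have hne : a ≠ b := by
    rintro rfl
    rw [dist_self] at hab
    linarith
  obtain ⟨i, hi⟩ := hc a b hne
  have hF := continuous_zpow_perm h1 h2 i
  have : dist ((f ^ i) a) ((f ^ i) b) ≤ c := by
    refine le_of_tendsto (((hF.tendsto a).comp ha).dist ((hF.tendsto b).comp hb)) ?_
    filter_upwards [eventually_ge_atTop i.natAbs] with n hn
    have := hg.id_le n
    simp only [id] at this
    exact hy (g n) i (by omega) (by omega)
  linarith

lemma nhds_window {B : Type} [TopologicalSpace B] {x : ℤ → B} {U : Set (ℤ → B)} (hU : U ∈ 𝓝 x) :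
    ∃ k : ℕ, ∀ s : ℤ → B, (∀ i : ℤ, -k ≤ i → i ≤ k → s i = x i) → s ∈ U := by
  obtain ⟨V, hVU, hV, hx⟩ := mem_nhds_iff.1 hU
  obtain ⟨I, u, hu, hI⟩ := isOpen_pi_iff.1 hV x hx
  obtain ⟨k, hk⟩ := (I.image Int.natAbs).exists_le
  refine ⟨k, fun s hs => hVU (hI fun i hi => ?_)⟩
  have := hk _ (Finset.mem_image_of_mem _ hi)
  rw [hs i (by omega) (by omega)]
  exact (hu i hi).2

lemma window_nhds {B : Type} [TopologicalSpace B] [DiscreteTopology B] (x : ℤ → B) (k : ℕ) :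
    {s : ℤ → B | ∀ i : ℤ, -k ≤ i → i ≤ k → s i = x i} ∈ 𝓝 x := by
  have := set_pi_mem_nhds (x := x) (s := fun i => {x i}) (Set.finite_Icc (-(k:ℤ)) k)
    (fun i _ => (isOpen_discrete {x i}).mem_nhds rfl)
  exact Filter.mem_of_superset this fun s hs i h1 h2 => hs i ⟨h1, h2⟩

lemma sft_closed {N : ℕ} {Fw : Set ((k : ℕ) × (Fin k → Fin N))} {x : ℤ → Fin N}
    (h : ∀ k : ℕ, ∃ s : ℤ → Fin N, (∀ w ∈ Fw, ¬ OccursIn w.2 s) ∧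
      ∀ i : ℤ, -k ≤ i → i ≤ k → s i = x i) : ∀ w ∈ Fw, ¬ OccursIn w.2 x := by
  rintro w hw ⟨i, hi⟩
  obtain ⟨s, hs, hsx⟩ := h (i.natAbs + w.1)
  refine hs w hw ⟨i, fun j => ?_⟩
  rw [← hi j]
  have := j.2
  exact hsx _ (by omega) (by omega)

lemma unif_window {N : ℕ} {Fw : Set ((k : ℕ) × (Fin k → Fin N))} {Y : Type} [MetricSpace Y]
    {φ : (ℤ → Fin N) → Y} (hφ : ContinuousOn φ {x | ∀ w ∈ Fw, ¬ OccursIn w.2 x})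
    (ε : ℝ) (hε : 0 < ε) : ∃ L : ℕ, ∀ s s' : ℤ → Fin N, (∀ w ∈ Fw, ¬ OccursIn w.2 s) →
      (∀ w ∈ Fw, ¬ OccursIn w.2 s') → (∀ i : ℤ, -L ≤ i → i ≤ L → s i = s' i) →
      dist (φ s) (φ s') ≤ ε := by
  by_contra hcon
  push Not at hcon
  choose s s' hs hs' hss hd using hcon
  obtain ⟨x, hx⟩ := ulim s
  have hxS : x ∈ {x | ∀ w ∈ Fw, ¬ OccursIn w.2 x} := sft_closed fun k => by
    obtain ⟨n, -, hn⟩ := hx k 0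
    exact ⟨s n, hs n, hn⟩
  have h1 := Metric.continuousWithinAt_iff'.1 (hφ x hxS) (ε / 2) (by linarith)
  obtain ⟨k, hk⟩ := nhds_window (mem_nhdsWithin_iff_eventually.1 h1)
  obtain ⟨n, hkn, hn⟩ := hx k k
  have e1 := hk (s n) hn (hs n)
  have e2 := hk (s' n) (fun i h1 h2 => by
    rw [← hn i h1 h2]; exact (hss n i (by omega) (by omega)).symm) (hs' n)
  have := dist_triangle_right (φ (s n)) (φ (s' n)) (φ x)
  have := hd n
  simp only [Set.mem_ofPred_eq] at e1 e2
  linarith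

lemma exists_Pres0 {Y : Type} [MetricSpace Y] [CompactSpace Y] {f : Equiv.Perm Y}
    (hY : FinitelyPresented f) : ∃ (A : Type) (_ : Finite A) (T : A → A → Prop)
      (K : ℕ → A → A → Prop) (φ : (ℤ → A) → Y), Pres0 f A T K φ := by
  obtain ⟨hf1, hf2, ⟨c, hc, hexp⟩, N, S, ⟨Fw, hFw, rfl⟩, -, -, φ, hφc, hφs, hφe⟩ := hY
  set P : (ℤ → Fin N) → Prop := fun x => ∀ w ∈ Fw, ¬ OccursIn w.2 x with hP
  have hshift : ∀ s, P s → ∀ n : ℤ, P (fun i => s (i + n)) := by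
    rintro s hs n w hw ⟨i, hi⟩
    refine hs w hw ⟨i + n, fun j => ?_⟩
    rw [← hi j]; congr 1; ring
  have hpow : ∀ s, P s → ∀ n : ℤ, (f ^ n) (φ s) = φ (fun i => s (i + n)) := by
    intro s hs n
    have := zpow_of_step f (fun n => φ (fun i => s (i + n))) (fun n => by
      rw [← hφe _ (hshift s hs n)]
      congr 1
      funext i
      simp only [shiftE, Equiv.coe_fn_mk]
      congr 1; ring) n
    simpa using this
  obtain ⟨l, hl⟩ := (hFw.image Sigma.fst).bddAbove
  set η : ℝ := c / 9 with hη
  have hη0 : 0 < η := by positivity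
  obtain ⟨L0, hL0⟩ := unif_window hφc (η / 2) (by positivity)
  obtain ⟨L, hLl, hL⟩ : ∃ L : ℕ, l ≤ L ∧ ∀ s s' : ℤ → Fin N, P s → P s' →
      (∀ i : ℤ, -L ≤ i → i ≤ L → s i = s' i) → dist (φ s) (φ s') ≤ η / 2 :=
    ⟨max l L0, le_max_left _ _, fun s s' hs hs' h => hL0 s s' hs hs' fun i h1 h2 =>
      h i (by push_cast; omega) (by push_cast; omega)⟩
  let I := Set.Icc (-(L:ℤ)) L
  let A := {u : I → Fin N // ∃ s, P s ∧ ∀ m : I, s m = u m}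
  let T : A → A → Prop := fun u v => ∀ (m : ℤ) (h1 : -(L:ℤ) ≤ m) (h2 : m + 1 ≤ L),
    u.1 ⟨m + 1, by constructor <;> omega⟩ = v.1 ⟨m, by constructor <;> omega⟩
  let cyl : A → (ℤ → Fin N) → Prop := fun u s => P s ∧ ∀ m : I, s m = u.1 m
  let K : ℕ → A → A → Prop := fun r u v => ∀ s s', cyl u s → cyl v s' → dist (φ s) (φ s') ≤ r * η
  let ctr : (ℤ → A) → (ℤ → Fin N) := fun t i => (t i).1 ⟨0, by constructor <;> omega⟩
  have hup : ∀ t, BP T t → ∀ (m : ℕ) (hm : m ≤ L) (i : ℤ),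
      (t i).1 ⟨m, by constructor <;> omega⟩ = ctr t (i + m) := by
    intro t ht m
    induction m with
    | zero => intro hm i; simp [ctr]
    | succ m ih =>
      intro hm i
      have := ht i m (by omega) (by omega)
      have h2 := ih (by omega) (i + 1)
      push_cast
      rw [this, h2]
      congr 1; ring
  have hdn : ∀ t, BP T t → ∀ (m : ℕ) (hm : m ≤ L) (i : ℤ),
      (t i).1 ⟨-m, by constructor <;> omega⟩ = ctr t (i - m) := by
    intro t ht m
    induction m with
    | zero => intro hm i; simp [ctr]
    | succ m ih =>
      intro hm i
      have := ht (i - 1) (-(m + 1 : ℕ)) (by omega) (by omega)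
      have h2 := ih (by omega) (i - 1)
      rw [sub_add_cancel] at this
      rw [← this]
      simp only [show -((m + 1 : ℕ) : ℤ) + 1 = -m by push_cast; ring]
      rw [h2]
      congr 1; push_cast; ring
  have hctr : ∀ t, BP T t → ∀ (i : ℤ) (m : I), (t i).1 m = ctr t (i + m) := by
    rintro t ht i ⟨m, hm1, hm2⟩
    rcases Int.le_total 0 m with h | h
    · obtain ⟨k, rfl⟩ := Int.eq_ofNat_of_zero_le h
      exact hup t ht k (by omega) i
    · obtain ⟨k, hk⟩ := Int.eq_ofNat_of_zero_le (show 0 ≤ -m by omega)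
      obtain rfl : m = -k := by omega
      exact hdn t ht k (by omega) i
  have hPc : ∀ t, BP T t → P (ctr t) := by
    rintro t ht w hw ⟨i, hi⟩
    obtain ⟨s, hs, hsm⟩ := (t i).2
    refine hs w hw ⟨0, fun j => ?_⟩
    have hj := j.2
    have hwl : w.1 ≤ l := hl (Set.mem_image_of_mem _ hw)
    have hm : (j : ℤ) ∈ I := by constructor <;> omega
    have := hsm ⟨j, hm⟩
    rw [zero_add, this, hctr t ht, ← hi j]
  have hcyl : ∀ t, BP T t → ∀ i : ℤ, cyl (t i) (fun k => ctr t (k + i)) := by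
    refine fun t ht i => ⟨hshift _ (hPc t ht) i, fun m => ?_⟩
    rw [hctr t ht, add_comm]
  refine ⟨A, inferInstance, T, K, fun t => φ (ctr t), ?_⟩
  have near : ∀ u s s', cyl u s → cyl u s' → dist (φ s) (φ s') ≤ η / 2 := by
    intro u s s' hs hs'
    exact hL s s' hs.1 hs'.1 fun i h1 h2 => (hs.2 ⟨i, h1, h2⟩).trans (hs'.2 ⟨i, h1, h2⟩).symm
  constructor
  · intro a s s' hs hs'
    have := near a s s' hs hs'
    push_cast; linarith
  · intro r a b h s s' hs hs'
    rw [dist_comm]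
    exact h s' s hs' hs
  · intro r s a b hrs h x x' hx hx'
    refine (h x x' hx hx').trans ?_
    have : (r : ℝ) ≤ s := by exact_mod_cast hrs
    gcongr
  · intro r s a b d h1 h2 x x' hx hx'
    obtain ⟨z, hz⟩ := b.2
    have e1 := h1 x z hx hz
    have e2 := h2 z x' hz hx'
    have := dist_triangle (φ x) (φ z) (φ x')
    push_cast
    linarith
  · intro y
    obtain ⟨s, hs, rfl⟩ : y ∈ φ '' _ := hφs ▸ Set.mem_univ y
    refine ⟨fun i => ⟨fun m => s (i + m), fun k => s (i + k), ?_, fun m => rfl⟩, ?_, ?_⟩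
    · have := hshift s hs i
      simpa only [add_comm] using this
    · intro i m h1 h2
      simp only
      congr 1; ring
    · simp [ctr]
  · intro t ht
    rw [← hφe _ (hPc t ht)]
    rfl
  · intro t t' ht ht' he i s s' hs hs'
    have e1 := near _ _ _ hs (hcyl t ht i)
    have e2 := near _ _ _ (hcyl t' ht' i) hs'
    rw [← hpow _ (hPc t ht)] at e1
    rw [← hpow _ (hPc t' ht')] at e2
    change φ (ctr t) = φ (ctr t') at he
    rw [← he] at e2
    have := dist_triangle (φ s) ((f ^ i) (φ (ctr t))) (φ s')
    push_cast; linarith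
  · intro ε hε
    obtain ⟨n, hn⟩ := expansive_unif hf1 hf2 hexp ε hε
    refine ⟨n, fun t t' ht ht' hK => hn _ _ fun i h1 h2 => ?_⟩
    rw [hpow _ (hPc t ht), hpow _ (hPc t' ht')]
    have := hK i h1 h2 _ _ (hcyl t ht i) (hcyl t' ht' i)
    refine this.trans ?_
    push_cast
    rw [hη]; linarith

/-! ### Metrization -/

lemma metrize (Z : Type) (V : ℕ → Z → Z → Prop) (hrefl : ∀ n x, V n x x)
    (hsymm : ∀ n x y, V n x y → V n y x) (hmono : ∀ m n x y, n ≤ m → V m x y → V n x y)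
    (hcomp : ∀ n, ∃ m, ∀ x y z, V m x y → V m y z → V n x z) :
    ∃ (X : Type) (_ : MetricSpace X) (π : Z → X), Function.Surjective π ∧
      (∀ ε : ℝ, 0 < ε → ∃ n, ∀ x y, V n x y → dist (π x) (π y) < ε) ∧
      (∀ n, ∃ ε : ℝ, 0 < ε ∧ ∀ x y, dist (π x) (π y) ≤ ε → V n x y) := by
  let E : ℕ → Set (Z × Z) := fun n => {p | V n p.1 p.2}
  let B : FilterBasis (Z × Z) :=
    { sets := Set.range E
      nonempty := ⟨E 0, 0, rfl⟩
      inter_sets := by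
        rintro _ _ ⟨m, rfl⟩ ⟨n, rfl⟩
        exact ⟨E (max m n), ⟨_, rfl⟩, fun p hp =>
          ⟨hmono _ _ _ _ (le_max_left _ _) hp, hmono _ _ _ _ (le_max_right _ _) hp⟩⟩ }
  let C : UniformSpace.Core Z := UniformSpace.Core.mkOfBasis B
    (by rintro _ ⟨n, rfl⟩ x; exact hrefl n x)
    (by rintro _ ⟨n, rfl⟩; exact ⟨E n, ⟨n, rfl⟩, fun p hp => hsymm _ _ _ hp⟩)
    (by
      rintro _ ⟨n, rfl⟩
      obtain ⟨m, hm⟩ := hcomp n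
      refine ⟨E m, ⟨m, rfl⟩, ?_⟩
      rintro ⟨x, z⟩ ⟨y, h1, h2⟩
      exact hm x y z h1 h2)
  let U : UniformSpace Z := UniformSpace.ofCore C
  have hb : (uniformity Z).HasBasis (fun _ : ℕ => True) E := by
    refine ⟨fun t => ?_⟩
    change t ∈ B.filter ↔ _
    rw [FilterBasis.mem_filter_iff]
    constructor
    · rintro ⟨_, ⟨n, rfl⟩, h⟩; exact ⟨n, trivial, h⟩
    · rintro ⟨n, -, h⟩; exact ⟨_, ⟨n, rfl⟩, h⟩
  have hcg : (uniformity Z).IsCountablyGenerated := hb.isCountablyGenerated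
  let P : PseudoMetricSpace Z := UniformSpace.pseudoMetricSpace Z
  have hd : (uniformity Z).HasBasis (fun ε : ℝ => 0 < ε) fun ε => {p : Z × Z | dist p.1 p.2 < ε} :=
    Metric.uniformity_basis_dist
  have hd' : (uniformity Z).HasBasis (fun ε : ℝ => 0 < ε) fun ε => {p : Z × Z | dist p.1 p.2 ≤ ε} :=
    Metric.uniformity_basis_dist_le
  refine ⟨SeparationQuotient Z, inferInstance, SeparationQuotient.mk,
    SeparationQuotient.surjective_mk, ?_, ?_⟩
  · intro ε hε
    obtain ⟨n, -, hn⟩ := hb.mem_iff.1 (hd.mem_of_mem hε)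
    refine ⟨n, fun x y hxy => ?_⟩
    rw [SeparationQuotient.dist_mk]
    exact hn (show (x, y) ∈ E n from hxy)
  · intro n
    obtain ⟨ε, hε, hn⟩ := hd'.mem_iff.1 (hb.mem_of_mem (i := n) trivial)
    refine ⟨ε, hε, fun x y hxy => ?_⟩
    rw [SeparationQuotient.dist_mk] at hxy
    exact hn (show (x, y) ∈ {p : Z × Z | dist p.1 p.2 ≤ ε} from hxy)

lemma descend {Z X W : Type} [MetricSpace X] [MetricSpace W] {V : ℕ → Z → Z → Prop} {π : Z → X}
    (hπ : Function.Surjective π)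
    (hπ2 : ∀ n, ∃ ε : ℝ, 0 < ε ∧ ∀ x y, dist (π x) (π y) ≤ ε → V n x y)
    (G : Z → W) (hG : ∀ ε : ℝ, 0 < ε → ∃ n, ∀ x y, V n x y → dist (G x) (G y) < ε) :
    ∃ g : X → W, Continuous g ∧ ∀ z, g (π z) = G z := by
  have hwd : ∀ x y, π x = π y → G x = G y := by
    intro x y hxy
    by_contra hne
    obtain ⟨n, hn⟩ := hG _ (dist_pos.2 hne)
    obtain ⟨ε, hε, h⟩ := hπ2 n
    exact lt_irrefl _ (hn x y (h x y (by rw [hxy, dist_self]; exact hε.le)))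
  have key : ∀ z, G (Function.surjInv hπ (π z)) = G z :=
    fun z => hwd _ _ (Function.surjInv_eq hπ _)
  refine ⟨fun x => G (Function.surjInv hπ x), ?_, key⟩
  rw [Metric.continuous_iff]
  intro b ε hε
  obtain ⟨n, hn⟩ := hG ε hε
  obtain ⟨δ, hδ, h⟩ := hπ2 n
  refine ⟨δ, hδ, fun a ha => ?_⟩
  obtain ⟨a, rfl⟩ := hπ a
  obtain ⟨b, rfl⟩ := hπ b
  rw [key, key]
  exact hn _ _ (h _ _ ha.le)

/-! ### Final assembly -/

section
variable {Y : Type} [MetricSpace Y] {f : Equiv.Perm Y} {A : Type} {T : A → A → Prop}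
    {K : ℕ → A → A → Prop} {φ : (ℤ → A) → Y} {M : ℕ}

/-- Paths of the extended graph. -/
def ZZ (T : A → A → Prop) (K : ℕ → A → A → Prop) : Type := {x : ℤ → A × Set A // BP (T' T K) x}

lemma BP.sh {B : Type} {R : B → B → Prop} {x : ℤ → B} (hx : BP R x) (n : ℤ) :
    BP R (fun i => x (i + n)) := by
  intro i
  have := hx (i + n)
  rwa [show i + n + 1 = i + 1 + n by ring] at this

/-- Shift by `n`. -/
def ZZ.sh (z : ZZ T K) (n : ℤ) : ZZ T K := ⟨fun i => z.1 (i + n), z.2.sh n⟩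

/-- Basic entourages. -/
def VV (n : ℕ) (x y : ZZ T K) : Prop := ∀ i : ℤ, -n ≤ i → i ≤ n → κ K (x.1 i) (y.1 i)

lemma ZZ.sh_sh (z : ZZ T K) (m n : ℤ) : (z.sh m).sh n = z.sh (n + m) := by
  apply Subtype.ext
  funext i
  simp only [ZZ.sh]
  congr 1; ring

lemma ZZ.sh_zero (z : ZZ T K) : z.sh 0 = z := by
  apply Subtype.ext
  funext i
  simp only [ZZ.sh, add_zero]

lemma smale_part (h : Pres f A T K φ M) [Finite A] :
    ∃ (X : Type) (_ : MetricSpace X) (π : ZZ T K → X) (F : Equiv.Perm X) (β : X → Y),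
      Function.Surjective π ∧
      (∀ ε : ℝ, 0 < ε → ∃ n, ∀ x y, VV n x y → dist (π x) (π y) < ε) ∧
      (∀ x y, π x = π y → ∀ i, κ K (x.1 i) (y.1 i)) ∧
      (∀ x, F (π x) = π (x.sh 1)) ∧ IsSmale F ∧ IsFactorMap F f β ∧ UResolving F β := by
  obtain ⟨X, mX, π, hπ, hπ1, hπ2⟩ := metrize (ZZ T K) VV (fun n x i _ _ => κ_refl h _)
    (fun n x y hxy i h1 h2 => κ_symm h (hxy i h1 h2))
    (fun m n x y hmn hxy i h1 h2 => hxy i (by omega) (by omega))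
    (fun n => by
      obtain ⟨m, hm⟩ := κ_comp h n
      exact ⟨m, fun x y z h1 h2 => hm x.1 z.1 x.2 z.2 fun i e1 e2 => ⟨_, h1 i e1 e2, h2 i e1 e2⟩⟩)
  have hκ : ∀ x y, π x = π y → ∀ i, κ K (x.1 i) (y.1 i) := by
    intro x y hxy i
    obtain ⟨ε, hε, hn⟩ := hπ2 i.natAbs
    exact hn x y (by rw [hxy, dist_self]; exact hε.le) i (by omega) (by omega)
  have hκ' : ∀ x y : ZZ T K, (∀ i, κ K (x.1 i) (y.1 i)) → π x = π y := by
    intro x y hxy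
    by_contra hne
    obtain ⟨n, hn⟩ := hπ1 _ (dist_pos.2 hne)
    exact lt_irrefl _ (hn x y fun i _ _ => hxy i)
  have hsh : ∀ m : ℤ, ∃ g : X → X, Continuous g ∧ ∀ z, g (π z) = π (z.sh m) := by
    intro m
    refine descend hπ hπ2 _ fun ε hε => ?_
    obtain ⟨n, hn⟩ := hπ1 ε hε
    exact ⟨n + m.natAbs, fun x y hxy => hn _ _ fun i h1 h2 => hxy _ (by omega) (by omega)⟩
  obtain ⟨g, hgc, hg⟩ := hsh 1
  obtain ⟨g', hgc', hg'⟩ := hsh (-1)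
  let F : Equiv.Perm X := ⟨g, g', fun x => by
    obtain ⟨z, rfl⟩ := hπ x
    rw [hg, hg', ZZ.sh_sh, neg_add_cancel, ZZ.sh_zero], fun x => by
    obtain ⟨z, rfl⟩ := hπ x
    rw [hg', hg, ZZ.sh_sh, add_neg_cancel, ZZ.sh_zero]⟩
  have hF : ∀ z, F (π z) = π (z.sh 1) := hg
  have hFn : ∀ (n : ℤ) z, (F ^ n) (π z) = π (z.sh n) := by
    intro n z
    have := zpow_of_step F (fun n => π (z.sh n)) (fun n => by
      rw [hF, ZZ.sh_sh, add_comm]) n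
    rwa [ZZ.sh_zero] at this
  obtain ⟨c, hc, hcV⟩ := hπ2 0
  have hexp0 : ∀ p q : X, (∀ n : ℤ, dist ((F ^ n) p) ((F ^ n) q) ≤ c) → p = q := by
    intro p q hpq
    obtain ⟨u, rfl⟩ := hπ p
    obtain ⟨v, rfl⟩ := hπ q
    refine hκ' _ _ fun n => ?_
    have := hpq n
    rw [hFn, hFn] at this
    have := hcV _ _ this 0 (by simp) (by simp)
    simpa [ZZ.sh] using this
  obtain ⟨β, hβc, hβ⟩ := descend hπ hπ2 (fun z : ZZ T K => φ (fun i => (z.1 i).1)) (fun ε hε => by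
    obtain ⟨n, hn⟩ := h.cont ε hε
    exact ⟨n, fun x y hxy => hn _ _ (bp_fst x.2) (bp_fst y.2) fun i h1 h2 =>
      h.mono (by omega) (hxy i h1 h2).1⟩)
  refine ⟨X, mX, π, F, β, hπ, hπ1, hκ, hF, ⟨hgc, hgc', ⟨c, hc, ?_⟩, ?_⟩, ⟨hβc, ?_, ?_⟩, ?_⟩
  · intro p q hpq
    by_contra hcon
    push Not at hcon
    exact hpq (hexp0 p q hcon)
  · refine ⟨c / 2, by linarith, fun ε hε hεc => ?_⟩
    obtain ⟨n0, hn0⟩ := hπ1 ε hε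
    obtain ⟨m0, hm0⟩ := κ_comp h n0
    obtain ⟨m, hmn, hm⟩ : ∃ m : ℕ, n0 ≤ m ∧ ∀ x y, BP (T' T K) x → BP (T' T K) y →
        (∀ i : ℤ, -m ≤ i → i ≤ m → ∃ v, κ K (x i) v ∧ κ K v (y i)) →
        ∀ i : ℤ, -n0 ≤ i → i ≤ n0 → κ K (x i) (y i) :=
      ⟨max n0 m0, le_max_left _ _, fun x y hx hy H => hm0 x y hx hy fun i h1 h2 =>
        H i (by omega) (by omega)⟩
    obtain ⟨δ, hδ, hδV⟩ := hπ2 (m + M)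
    refine ⟨δ, hδ, fun x y hxy => ?_⟩
    obtain ⟨u, rfl⟩ := hπ x
    obtain ⟨v, rfl⟩ := hπ y
    have huv := hδV u v hxy.le
    obtain ⟨z, hz, hzv, hzu⟩ := bracket h u.2 v.2 (-m) (fun i h1 h2 => huv i (by omega) (by omega))
    let zz : ZZ T K := ⟨z, hz⟩
    refine ⟨π zz, ⟨?_, ?_⟩, ?_⟩
    · intro k
      rw [hFn, hFn]
      refine hn0 _ _ fun i h1 h2 => ?_
      exact κ_symm h (hzu (i + k) (by omega))
    · intro k
      rw [hFn, hFn]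
      refine hn0 _ _ fun i h1 h2 => ?_
      refine hm _ _ (v.sh _).2 (zz.sh _).2 ?_ i h1 h2
      intro j j1 j2
      by_cases hj : j + -(k:ℤ) ≤ -m
      · exact ⟨_, κ_refl h _, κ_symm h (hzv _ hj)⟩
      · exact ⟨u.1 (j + -(k:ℤ)), κ_symm h (huv _ (by omega) (by omega)),
          κ_symm h (hzu _ (by omega))⟩
    · rintro w ⟨hw1, hw2⟩
      obtain ⟨hz1, hz2⟩ : π zz ∈ Ws F ε (π u) ∧ π zz ∈ Wu F ε (π v) := by
        constructor
        · intro k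
          rw [hFn, hFn]
          refine hn0 _ _ fun i h1 h2 => ?_
          exact κ_symm h (hzu (i + k) (by omega))
        · intro k
          rw [hFn, hFn]
          refine hn0 _ _ fun i h1 h2 => ?_
          refine hm _ _ (v.sh _).2 (zz.sh _).2 ?_ i h1 h2
          intro j j1 j2
          by_cases hj : j + -(k:ℤ) ≤ -m
          · exact ⟨_, κ_refl h _, κ_symm h (hzv _ hj)⟩
          · exact ⟨u.1 (j + -(k:ℤ)), κ_symm h (huv _ (by omega) (by omega)),
              κ_symm h (hzu _ (by omega))⟩
      refine hexp0 _ _ fun n => ?_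
      obtain ⟨k, rfl | rfl⟩ := n.eq_nat_or_neg
      · have e1 := hw1 k
        have e2 := hz1 k
        have := dist_triangle_left ((F ^ (k:ℤ)) w) ((F ^ (k:ℤ)) (π zz)) ((F ^ (k:ℤ)) (π u))
        linarith
      · have e1 := hw2 k
        have e2 := hz2 k
        have := dist_triangle_left ((F ^ (-(k:ℤ))) w) ((F ^ (-(k:ℤ))) (π zz))
          ((F ^ (-(k:ℤ))) (π v))
        linarith
  · intro y
    obtain ⟨t, ht, rfl⟩ := h.surj y
    obtain ⟨x, hx, hxt⟩ := lift_path h ht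
    refine ⟨π (⟨x, hx⟩ : {x : ℤ → A × Set A // BP (T' T K) x}), (hβ _).trans ?_⟩
    exact congrArg φ (funext hxt)
  · intro x
    obtain ⟨u, rfl⟩ := hπ x
    rw [hF, hβ, hβ]
    exact h.equi _ (bp_fst u.2)
  · intro x p hp q hq hpq
    obtain ⟨w, rfl⟩ := hπ x
    obtain ⟨u, rfl⟩ := hπ p
    obtain ⟨v, rfl⟩ := hπ q
    rw [hβ, hβ] at hpq
    have hK := h.K1 _ _ (bp_fst u.2) (bp_fst v.2) hpq
    have hev : ∀ᶠ n : ℕ in atTop, dist ((F ^ (-(n:ℤ))) (π u)) ((F ^ (-(n:ℤ))) (π v)) ≤ c := by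
      have e1 := (tendsto_order.1 hp).2 (c / 2) (by linarith)
      have e2 := (tendsto_order.1 hq).2 (c / 2) (by linarith)
      filter_upwards [e1, e2] with n e1 e2
      have := dist_triangle_left ((F ^ (-(n:ℤ))) (π u)) ((F ^ (-(n:ℤ))) (π v))
        ((F ^ (-(n:ℤ))) (π w))
      linarith
    obtain ⟨n0, hn0⟩ := eventually_atTop.1 hev
    refine hκ' _ _ fun i => lemU h u.2 v.2 hK (-n0) (fun j hj => ?_) i
    have := hn0 (-j).toNat (by omega)
    rw [hFn, hFn] at this
    have := hcV _ _ this 0 (by simp) (by simp)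
    simp only [ZZ.sh] at this
    rwa [show 0 + -(((-j).toNat : ℕ) : ℤ) = j by omega] at this

end

lemma main {Y : Type} [MetricSpace Y] [CompactSpace Y] (f : Equiv.Perm Y)
    (hY : FinitelyPresented f) :
    ∃ (N : ℕ) (S : Set (ℤ → Fin N)) (X : Type) (mX : MetricSpace X) (_ : CompactSpace X)
      (F : Equiv.Perm X) (α : (ℤ → Fin N) → X) (β : X → Y),
      IsSFT S ∧ ShiftInvariant S ∧ S.Nonempty ∧ IsSmale F ∧
      IsSubshiftFactorMap S F α ∧ (∀ t ∈ S, Set.InjOn α (shiftStable S t)) ∧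
      IsFactorMap F f β ∧ UResolving F β := by
  have hne : Nonempty Y := by
    obtain ⟨-, -, -, N, S, -, -, ⟨s, -⟩, φ, -⟩ := hY
    exact ⟨φ s⟩
  obtain ⟨A0, hA0, T0, K0, φ0, h0⟩ := exists_Pres0 hY
  obtain ⟨A, hA, T, K, φ, M, h⟩ := exists_Pres h0
  obtain ⟨X, mX, π, F, β, hπ, hπ1, hκ, hF, hS, hβ, hu⟩ := smale_part h
  obtain ⟨N, ⟨e⟩⟩ := Finite.exists_equiv_fin (A × Set A)
  let R : Fin N → Fin N → Prop := fun a b => T' T K (e.symm a) (e.symm b)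
  let S : Set (ℤ → Fin N) := {x | ∀ i, R (x i) (x (i + 1))}
  let toZ : ∀ x : ℤ → Fin N, x ∈ S → ZZ T K := fun x hx => ⟨fun i => e.symm (x i), hx⟩
  obtain ⟨z0⟩ : Nonempty (ZZ T K) := by
    obtain ⟨y⟩ := hne
    obtain ⟨t, ht, -⟩ := h.surj y
    obtain ⟨x, hx, -⟩ := lift_path h ht
    exact ⟨⟨x, hx⟩⟩
  let fromZ : ZZ T K → (ℤ → Fin N) := fun z i => e (z.1 i)
  have hfrom : ∀ z, fromZ z ∈ S := by
    intro z i
    simp only [fromZ, R, e.symm_apply_apply]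
    exact z.2 i
  have hto : ∀ z, toZ (fromZ z) (hfrom z) = z := by
    intro z
    apply Subtype.ext
    funext i
    simp only [toZ, fromZ, e.symm_apply_apply]
  classical
  let α : (ℤ → Fin N) → X := fun x => if hx : x ∈ S then π (toZ x hx) else π z0
  have hα : ∀ x (hx : x ∈ S), α x = π (toZ x hx) := fun x hx => dif_pos hx
  have hαc : ContinuousOn α S := by
    intro x hx
    rw [Metric.continuousWithinAt_iff']
    intro ε hε
    obtain ⟨n, hn⟩ := hπ1 ε hε
    filter_upwards [mem_nhdsWithin_of_mem_nhds (window_nhds x n), self_mem_nhdsWithin] with y hy hyS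
    rw [hα x hx, hα y hyS]
    refine hn _ _ fun i h1 h2 => ?_
    have : y i = x i := hy i h1 h2
    simp only [toZ, this]
    exact κ_refl h _
  have hαs : α '' S = Set.univ := by
    apply Set.eq_univ_of_forall
    intro p
    obtain ⟨z, rfl⟩ := hπ p
    exact ⟨fromZ z, hfrom z, by rw [hα _ (hfrom z), hto]⟩
  have hSc : IsCompact S := by
    have : S = ⋂ i : ℤ, (fun x : ℤ → Fin N => (x i, x (i + 1))) ⁻¹' {p | R p.1 p.2} := by
      ext x; simp [S]
    apply IsClosed.isCompact
    rw [this]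
    exact isClosed_iInter fun i => (isClosed_discrete _).preimage (by fun_prop)
  have hX : CompactSpace X := ⟨by rw [← hαs]; exact hSc.image_of_continuousOn hαc⟩
  refine ⟨N, S, X, mX, hX, F, α, β, ?_, ⟨?_, ?_⟩, ⟨_, hfrom z0⟩, hS, ⟨hαc, hαs, ?_⟩, ?_, hβ, hu⟩
  · refine ⟨(fun p : Fin N × Fin N => ⟨2, ![p.1, p.2]⟩) '' {p | ¬ R p.1 p.2},
      (Set.toFinite _).image _, ?_⟩
    ext x
    constructor
    · rintro hx w ⟨p, hp, rfl⟩ ⟨i, hi⟩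
      apply hp
      have e0 := hi 0
      have e1 := hi 1
      simp at e0 e1
      rw [← e0, ← e1]
      exact hx i
    · intro hx i
      by_contra hcon
      refine hx _ ⟨(x i, x (i + 1)), hcon, rfl⟩ ⟨i, fun j => ?_⟩
      fin_cases j <;> simp
  · intro x hx i
    exact hx (i + 1)
  · intro x hx i
    have := hx (i - 1)
    simp only [shiftE, Equiv.symm, Equiv.coe_fn_mk]
    rwa [show i - 1 + 1 = i + 1 - 1 by ring] at this
  · intro x hx
    have hx' : shiftE (Fin N) x ∈ S := fun i => hx (i + 1)
    rw [hα x hx, hα _ hx', hF]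
    rfl
  · rintro t - x ⟨hx, n1, h1⟩ y ⟨hy, n2, h2⟩ hxy
    rw [hα x hx, hα y hy] at hxy
    have := s_inj h (toZ x hx).2 (toZ y hy).2 (hκ _ _ hxy) (max n1 n2) (fun j hj => by
      simp only [toZ]
      rw [h1 j (by omega), h2 j (by omega)])
    funext i
    exact e.symm.injective (congrFun this i)

end FPS

/-- For a transitive finitely presented system `(Y,f)` there exist an SFT
`(Σ,σ)`, a Smale space `(X,F)`, an s-resolving factor map `α : Σ → X` and a u-resolving
factor map `β : X → Y`. -/
theorem stmt13 {Y : Type} [MetricSpace Y] [CompactSpace Y] (f : Equiv.Perm Y)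
    (hY : FinitelyPresented f) (hYt : TopTransitive f) :
    ∃ (N : ℕ) (S : Set (ℤ → Fin N)) (X : Type) (mX : MetricSpace X) (cX : CompactSpace X)
      (F : Equiv.Perm X) (α : (ℤ → Fin N) → X) (β : X → Y),
      IsSFT S ∧ ShiftInvariant S ∧ S.Nonempty ∧ IsSmale F ∧
      IsSubshiftFactorMap S F α ∧ (∀ t ∈ S, Set.InjOn α (shiftStable S t)) ∧
      IsFactorMap F f β ∧ UResolving F β := by
  exact FPS.main f hY
end

section
/- Let Σ be a transitive one-step SFT, (Y,f) a transitive Smale space, and φ : Σ → Y a finite-to-one factor map. If t, t' ∈ Σ satisfy φ(t) = φ(t') and t ∈ W^s(t'), then for some j ∈ ℤ the point φ(σʲ t') lies in the unstable t_j-boundary of R_{t'_j} and in the unstable t'_j-boundary of R_{t_j}, where R_i = φ(C_i) are the rectangles that are images of the 0-cylinders. -/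
open Filter Topology Set

/-- A rectangle: a closed set on which the bracket is everywhere defined. -/
def IsRectangle {Y : Type*} [MetricSpace Y] (f : Equiv.Perm Y) (ε : ℝ) (R : Set Y) : Prop :=
  IsClosed R ∧ ∀ x ∈ R, ∀ y ∈ R, (Ws f ε x ∩ Wu f ε y).Nonempty

/-- The unstable `Ra`-boundary of `Rb`: points of `Rb` that are limits of points of
`W^s_ε(x) ∩ Ra` lying outside `Rb`. -/
def UnstableBoundary {Y : Type*} [MetricSpace Y] (f : Equiv.Perm Y) (ε : ℝ)
    (Rb Ra : Set Y) : Set Y :=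
  {x | x ∈ Rb ∧ ∃ u : ℕ → Y, (∀ k, u k ∈ (Ws f ε x ∩ Ra) \ Rb) ∧
    Filter.Tendsto u Filter.atTop (nhds x)}


theorem aux_shift_pow {A : Type*} (j : ℤ) : ∀ (x : ℤ → A) (i : ℤ),
    ((shiftE A) ^ j) x i = x (i + j) := by
  induction j using Int.induction_on with
  | zero => intro x i; simp
  | succ n ih =>
    intro x i
    rw [zpow_add_one, Equiv.Perm.mul_apply, ih]
    change x (i + n + 1) = _
    congr 1; ring
  | pred n ih =>
    intro x i
    rw [zpow_sub_one, Equiv.Perm.mul_apply, ih]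
    change x (i + -n - 1) = _
    congr 1; ring

theorem aux_shift_mem {A : Type*} {T : A → A → Prop} {S : Set (ℤ → A)}
    (hS : IsOneStepSFTFor T S) (j : ℤ) (x : ℤ → A) (hx : x ∈ S) :
    ((shiftE A) ^ j) x ∈ S := by
  rw [IsOneStepSFTFor] at hS
  subst hS
  intro i
  rw [aux_shift_pow, aux_shift_pow]
  have := hx (i + j)
  rwa [show i + 1 + j = i + j + 1 by ring]

theorem aux_phi_pow {N : ℕ} {Y : Type*} [MetricSpace Y] {f : Equiv.Perm Y}
    {T : Fin N → Fin N → Prop} {S : Set (ℤ → Fin N)}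
    (hS : IsOneStepSFTFor T S) {φ : (ℤ → Fin N) → Y} (hφ : IsSubshiftFactorMap S f φ)
    (j : ℤ) : ∀ x ∈ S, φ (((shiftE (Fin N)) ^ j) x) = (f ^ j) (φ x) := by
  induction j using Int.induction_on with
  | zero => intro x hx; simp
  | succ n ih =>
    intro x hx
    rw [add_comm, zpow_add, zpow_add, Equiv.Perm.mul_apply, Equiv.Perm.mul_apply, zpow_one,
      zpow_one, hφ.2.2 _ (aux_shift_mem hS _ x hx), ih x hx]
  | pred n ih =>
    intro x hx
    rw [sub_eq_add_neg, add_comm, zpow_add, zpow_add, Equiv.Perm.mul_apply,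
      Equiv.Perm.mul_apply, ← ih x hx]
    have h := hφ.2.2 _ (aux_shift_mem hS (-1) _ (aux_shift_mem hS (-(n:ℤ)) x hx))
    have h2 : shiftE (Fin N) (((shiftE (Fin N)) ^ (-1 : ℤ)) (((shiftE (Fin N)) ^ (-(n:ℤ))) x))
        = ((shiftE (Fin N)) ^ (-(n:ℤ))) x := by simp
    rw [h2] at h
    rw [h]; simp

theorem aux_mem_R {N : ℕ} {Y : Type*} [MetricSpace Y] {f : Equiv.Perm Y}
    {T : Fin N → Fin N → Prop} {S : Set (ℤ → Fin N)}
    (hS : IsOneStepSFTFor T S) {φ : (ℤ → Fin N) → Y} (hφ : IsSubshiftFactorMap S f φ)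
    {R : Fin N → Set Y} (hR : ∀ j : Fin N, R j = φ '' {s ∈ S | s 0 = j})
    (x : ℤ → Fin N) (hx : x ∈ S) (k : ℤ) : (f ^ k) (φ x) ∈ R (x k) := by
  rw [hR, ← aux_phi_pow hS hφ k x hx]
  exact ⟨_, ⟨aux_shift_mem hS k x hx, by rw [aux_shift_pow, zero_add]⟩, rfl⟩

/-- Gluing of a left tail of `p` and a right tail of `q`. -/
def auxJoin {A : Type*} (p q : ℤ → A) : ℤ → A := fun i => if i ≤ 0 then p i else q i

theorem aux_join_mem {A : Type*} {T : A → A → Prop} {S : Set (ℤ → A)}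
    (hS : IsOneStepSFTFor T S) (p q : ℤ → A) (hp : p ∈ S) (hq : q ∈ S)
    (h : T (p 0) (q 1)) : auxJoin p q ∈ S := by
  rw [IsOneStepSFTFor] at hS
  subst hS
  intro i
  unfold auxJoin
  rcases lt_trichotomy i 0 with h0 | h0 | h0
  · rw [if_pos (by omega), if_pos (by omega)]; exact hp i
  · subst h0; simpa using h
  · rw [if_neg (by omega), if_neg (by omega)]; exact hq i

theorem aux_nhd {N : ℕ} {Y : Type*} [MetricSpace Y] {S : Set (ℤ → Fin N)}
    {φ : (ℤ → Fin N) → Y} (hφ : ContinuousOn φ S) (a : ℤ → Fin N) (ha : a ∈ S)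
    (δ : ℝ) (hδ : 0 < δ) :
    ∃ n : ℕ, ∀ s ∈ S, (∀ i : ℤ, -n ≤ i → i ≤ n → s i = a i) → dist (φ s) (φ a) < δ := by
  have h1 := hφ a ha (Metric.ball_mem_nhds (φ a) hδ)
  rw [mem_map, mem_nhdsWithin] at h1
  obtain ⟨U, hU, haU, hsub⟩ := h1
  rw [isOpen_pi_iff] at hU
  obtain ⟨I, u, hu, hIu⟩ := hU a haU
  refine ⟨I.sup Int.natAbs, fun s hs h => hsub ⟨hIu ?_, hs⟩⟩
  intro i hi
  have h3 : i.natAbs ≤ I.sup Int.natAbs := Finset.le_sup (f := Int.natAbs) hi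
  rw [h i (by omega) (by omega)]
  exact (hu i hi).2

theorem aux_open {N : ℕ} (a : ℤ → Fin N) (n : ℕ) (d : ℤ) :
    IsOpen {x : ℤ → Fin N | ∀ i : ℤ, -n ≤ i → i ≤ n → x (i + d) = a i} := by
  have : {x : ℤ → Fin N | ∀ i : ℤ, -n ≤ i → i ≤ n → x (i + d) = a i}
      = ⋂ i ∈ Finset.Icc (-(n:ℤ)) n, {x : ℤ → Fin N | x (i + d) = a i} := by
    ext x; simp
  rw [this]
  refine isOpen_biInter_finset fun i _ => ?_
  exact (isOpen_discrete ({a i} : Set (Fin N))).preimage (continuous_apply (A := fun _ : ℤ => Fin N) (i + d))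

theorem aux_periodic {N : ℕ} {T : Fin N → Fin N → Prop} {S : Set (ℤ → Fin N)}
    (hS : IsOneStepSFTFor T S) (hSt : SubshiftTransitive S) (a : ℤ → Fin N) (ha : a ∈ S)
    (n : ℕ) : ∃ s ∈ S, ∃ p : ℤ, 0 < p ∧ (∀ i, s (i + p) = s i) ∧
      ∀ i : ℤ, -n ≤ i → i ≤ n → s i = a i := by
  obtain ⟨m, x, ⟨hxU, hxV⟩, hxS⟩ := hSt _ _ (aux_open a n (2 * n + 1)) (aux_open a n 0)
    ⟨((shiftE (Fin N)) ^ (-(2 * n + 1 : ℤ))) a,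
      fun i _ _ => by rw [aux_shift_pow]; congr 1; ring, aux_shift_mem hS _ _ ha⟩
    ⟨a, fun i _ _ => by rw [add_zero], ha⟩
  have hU : ∀ i : ℤ, -n ≤ i → i ≤ n → x (i + (2 * n + 1) + m) = a i := by
    intro i h1 h2
    have := hxU i h1 h2
    rwa [aux_shift_pow] at this
  have hV : ∀ i : ℤ, -n ≤ i → i ≤ n → x i = a i := by
    intro i h1 h2
    have := hxV i h1 h2
    rwa [add_zero] at this
  obtain ⟨p, hp⟩ : ∃ p : ℤ, p = 2 * n + 1 + m := ⟨_, rfl⟩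
  have hp0 : 0 < p := by omega
  refine ⟨fun i => x (-n + (i + n) % p), ?_, p, hp0, ?_, ?_⟩
  · rw [IsOneStepSFTFor] at hS
    subst hS
    intro i
    have h0 := Int.emod_nonneg (i + n) hp0.ne'
    have h1 := Int.emod_lt_of_pos (i + n) hp0
    have hx := hxS (-n + (i + n) % p)
    have e : (i + 1 + n) % p = ((i + n) % p + 1) % p := by
      rw [Int.emod_add_emod]; congr 1; ring
    simp only [e]
    rcases lt_or_eq_of_le (show (i + n) % p + 1 ≤ p by omega) with h | h
    · rw [Int.emod_eq_of_lt (by omega) h, ← add_assoc]; exact hx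
    · rw [h, Int.emod_self, add_zero, hV (-n) (by omega) (by omega),
        ← hU (-n) (by omega) (by omega)]
      rwa [show -(n:ℤ) + (i + n) % p + 1 = -n + (2 * n + 1) + m by omega] at hx
  · intro i
    change x _ = x _
    rw [show i + p + n = i + n + p by ring, Int.add_emod_right]
  · intro i h1 h2
    change x _ = _
    rw [Int.emod_eq_of_lt (by omega) (by omega), ← hV i h1 h2]
    congr 1; ring

theorem aux_core {Y : Type*} [MetricSpace Y] [CompactSpace Y] (f : Equiv.Perm Y)
    (c : ℝ) (hexp : Expansive f c)
    (ε : ℝ) (hε : ε < c / 2)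
    (N : ℕ) (T : Fin N → Fin N → Prop) (S : Set (ℤ → Fin N))
    (hS : IsOneStepSFTFor T S) (hStrans : SubshiftTransitive S)
    (φ : (ℤ → Fin N) → Y) (hφ : IsSubshiftFactorMap S f φ)
    (hfin : ∀ y : Y, (φ ⁻¹' {y} ∩ S).Finite)
    (R : Fin N → Set Y) (hR : ∀ j : Fin N, R j = φ '' {s ∈ S | s 0 = j})
    (hdiam : ∀ j : Fin N, Metric.diam (R j) < ε)
    (a a' : ℤ → Fin N) (ha : a ∈ S) (ha' : a' ∈ S)
    (heq : φ a = φ a') (h0 : a 0 ≠ a' 0) (h1 : ∀ i > 0, a i = a' i) :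
    φ a ∈ UnstableBoundary f ε (R (a' 0)) (R (a 0)) := by
  have hmem := aux_mem_R hS hφ hR
  have hd : ∀ j, ∀ x ∈ R j, ∀ y ∈ R j, dist x y < ε := fun j x hx y hy =>
    (Metric.dist_le_diam_of_mem (Metric.isBounded_of_compactSpace) hx hy).trans_lt (hdiam j)
  refine ⟨by simpa [heq] using hmem a' ha' 0, ?_⟩
  by_contra hcon
  have hδ : ∃ δ > 0, ∀ z ∈ Ws f ε (φ a) ∩ R (a 0), dist z (φ a) < δ → z ∈ R (a' 0) := by
    by_contra hne
    push Not at hne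
    apply hcon
    choose u hu1 hu2 hu3 using fun k : ℕ => hne (1 / ((k : ℝ) + 1)) (by positivity)
    refine ⟨u, fun k => ⟨hu1 k, hu3 k⟩, ?_⟩
    rw [tendsto_iff_dist_tendsto_zero]
    exact squeeze_zero (fun _ => dist_nonneg) (fun k => (hu2 k).le)
      tendsto_one_div_add_atTop_nhds_zero_nat
  obtain ⟨δ, hδ0, hδ⟩ := hδ
  obtain ⟨n, hn⟩ := aux_nhd hφ.1 a ha δ hδ0
  obtain ⟨s, hsS, p, hp0, hper, hsa⟩ := aux_periodic hS hStrans a ha (n + 1)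
  push_cast at hsa
  have hs0 : s 0 = a 0 := hsa 0 (by omega) (by omega)
  have hs1 : s 1 = a 1 := hsa 1 (by omega) (by omega)
  have hT : ∀ x ∈ S, T (x 0) (x 1) := by
    intro x hx
    rw [IsOneStepSFTFor] at hS
    rw [hS] at hx
    simpa using hx 0
  have hw : auxJoin s a ∈ S := aux_join_mem hS s a hsS ha (by rw [hs0]; exact hT a ha)
  have hz : φ (auxJoin s a) ∈ R (a' 0) := by
    apply hδ
    · constructor
      · intro k
        refine hd (a k) _ (hmem a ha k) _ ?_
        have := hmem _ hw k
        have e : auxJoin s a k = a k := by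
          unfold auxJoin
          split_ifs with h
          · have : (k : ℤ) = 0 := by omega
            rw [this, hs0]
          · rfl
        rwa [e] at this
      · simpa [auxJoin, hs0] using hmem _ hw 0
    · apply hn _ hw
      intro i hi1 hi2
      unfold auxJoin
      split_ifs
      · exact hsa i (by omega) (by omega)
      · rfl
  rw [hR] at hz
  obtain ⟨r, ⟨hrS, hr0⟩, hrz⟩ := hz
  have hu : auxJoin r s ∈ S := aux_join_mem hS r s hrS hsS (by
    rw [hr0, hs1, h1 1 one_pos]; exact hT a' ha')
  have hus : φ (auxJoin r s) = φ s := by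
    by_contra hne
    obtain ⟨k, hk⟩ := hexp _ _ hne
    have hA := hmem _ hu k
    have hB := hmem _ hsS k
    have hC := hmem _ hrS k
    have hD := hmem _ hw k
    rw [← hrz] at hD
    unfold auxJoin at hA hD
    by_cases hk0 : k ≤ 0
    · rw [if_pos hk0] at hA hD
      have e1 := hd _ _ hA _ hC
      have e2 := hd _ _ hD _ hB
      have := dist_triangle ((f ^ k) (φ fun i => if i ≤ 0 then r i else s i)) ((f ^ k) (φ r))
        ((f ^ k) (φ s))
      unfold auxJoin at hk
      linarith
    · rw [if_neg hk0] at hA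
      have e1 := hd _ _ hA _ hB
      unfold auxJoin at hk
      have := dist_nonneg.trans_lt e1
      linarith
  have hperN : ∀ (k : ℕ) i, s (i + k * p) = s i := by
    intro k
    induction k with
    | zero => intro i; simp
    | succ k ih =>
      intro i
      rw [← ih i, ← hper (i + k * p)]
      congr 1; push_cast; ring
  refine Set.infinite_of_injective_forall_mem
    (f := fun k : ℕ => ((shiftE (Fin N)) ^ ((k : ℤ) * p)) (auxJoin r s)) ?_ ?_ (hfin (φ s))
  · have key : ∀ k l : ℕ, k < l →
        ((shiftE (Fin N)) ^ ((k : ℤ) * p)) (auxJoin r s) ≠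
          ((shiftE (Fin N)) ^ ((l : ℤ) * p)) (auxJoin r s) := by
      intro k l hkl h
      have h := congrFun h (-(k * p))
      rw [aux_shift_pow, aux_shift_pow] at h
      obtain ⟨m, rfl⟩ := Nat.exists_eq_add_of_lt hkl
      have e : -((k:ℤ) * p) + ((k + m + 1 : ℕ) : ℤ) * p = 0 + ((m + 1 : ℕ) : ℤ) * p := by
        push_cast; ring
      have hpos : 0 < ((m + 1 : ℕ) : ℤ) * p := by positivity
      rw [e, neg_add_cancel] at h
      unfold auxJoin at h
      rw [if_pos le_rfl, if_neg (by omega), hperN, hs0, hr0] at h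
      exact h0 h.symm
    intro k l hkl
    rcases lt_trichotomy k l with h | h | h
    · exact (key k l h hkl).elim
    · exact h
    · exact (key l k h hkl.symm).elim
  · intro k
    refine ⟨?_, aux_shift_mem hS _ _ hu⟩
    change φ _ = φ s
    rw [aux_phi_pow hS hφ _ _ hu, hus, ← aux_phi_pow hS hφ _ _ hsS]
    congr 1
    funext i
    rw [aux_shift_pow, hperN]

/-- For a finite-to-one factor map `φ` from a transitive one-step SFT to a
transitive Smale space with a Markov family of rectangles as cylinder images, if
`φ(t) = φ(t')` with `t` in the stable set of `t'` (and `t ≠ t'`), then for some `j` the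
point `φ(σʲ t')` lies in the unstable `t_j`-boundary of `R_{t'_j}` and in the unstable
`t'_j`-boundary of `R_{t_j}`. -/
theorem stmt16 {Y : Type*} [MetricSpace Y] [CompactSpace Y] (f : Equiv.Perm Y)
    (hY : IsSmale f) (hYt : TopTransitive f)
    (c : ℝ) (hc : 0 < c) (hexp : Expansive f c)
    (ε : ℝ) (hε0 : 0 < ε) (hε : ε < c / 2)
    (N : ℕ) (T : Fin N → Fin N → Prop) (S : Set (ℤ → Fin N))
    (hS : IsOneStepSFTFor T S) (hStrans : SubshiftTransitive S)
    (φ : (ℤ → Fin N) → Y) (hφ : IsSubshiftFactorMap S f φ)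
    (hfin : ∀ y : Y, (φ ⁻¹' {y} ∩ S).Finite)
    (R : Fin N → Set Y) (hR : ∀ j : Fin N, R j = φ '' {s ∈ S | s 0 = j})
    (hrect : ∀ j : Fin N, IsRectangle f ε (R j) ∧ Metric.diam (R j) < ε)
    (hMarkov : ∀ a b : Fin N, T a b → ∀ y ∈ R a, f y ∈ R b →
      (∀ z ∈ Ws f ε y ∩ R a, f z ∈ Ws f ε (f y) ∩ R b) ∧
      (∀ z ∈ Wu f ε (f y) ∩ R b, f.symm z ∈ Wu f ε y ∩ R a))
    (t t' : ℤ → Fin N) (ht : t ∈ S) (ht' : t' ∈ S)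
    (heq : φ t = φ t') (hst : t ∈ shiftStable S t') (htne : t ≠ t') :
    ∃ j : ℤ, φ (((shiftE (Fin N)) ^ j) t') ∈
      UnstableBoundary f ε (R (t' j)) (R (t j)) ∩
      UnstableBoundary f ε (R (t j)) (R (t' j)) := by

  obtain ⟨-, M, hM⟩ := hst
  obtain ⟨j, hj, hmax⟩ : ∃ j : ℤ, t j ≠ t' j ∧ ∀ i, t i ≠ t' i → i ≤ j := by
    apply Int.exists_greatest_of_bdd
    · refine ⟨M, fun i hi => ?_⟩
      by_contra h
      exact hi (hM i (by omega))
    · exact Function.ne_iff.mp htne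
  have e : φ (((shiftE (Fin N)) ^ j) t) = φ (((shiftE (Fin N)) ^ j) t') := by
    rw [aux_phi_pow hS hφ _ _ ht, aux_phi_pow hS hφ _ _ ht', heq]
  have hgt : ∀ i > 0, t (i + j) = t' (i + j) := by
    intro i hi
    by_contra h
    have := hmax _ h
    omega
  have A := aux_core f c hexp ε hε N T S hS hStrans φ hφ hfin R hR (fun j => (hrect j).2)
    _ _ (aux_shift_mem hS j t ht) (aux_shift_mem hS j t' ht') e
    (by simpa [aux_shift_pow] using hj) (by simpa [aux_shift_pow] using hgt)
  have B := aux_core f c hexp ε hε N T S hS hStrans φ hφ hfin R hR (fun j => (hrect j).2)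
    _ _ (aux_shift_mem hS j t' ht') (aux_shift_mem hS j t ht) e.symm
    (by simpa [aux_shift_pow] using hj.symm)
    (by simpa [aux_shift_pow] using fun i hi => (hgt i hi).symm)
  rw [e] at A
  simp only [aux_shift_pow, zero_add] at A B
  exact ⟨j, A, B⟩
end
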